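/- arXiv:2209.00986 — 8 statements merged into one kernel-verified Lean document; each statement's English description precedes it below -/
import Mathlib

section
/- Let G be a finite group and let H, K ≤ G be subgroups with (G:H) = (G:K) = n. Then P_G(H,K) = 1 if and only if H = K and H is normal in G. Consequently, tp(G) = 1 if and only if every subgroup of G is normal in G. -/
/-!
A left transversal of `H` amounts to a free choice of one element in each left coset, so there are
exactly `|H| ^ (G:H)` of them (`card_isLeftTransversal`). Hence `P_G(H,K) ≤ 1`, with equality iff
every left transversal of `H` is a right transversal of `K` (`transProb_eq_one_iff`).

If this holds, take `g : G`, `h ∈ H` and a left transversal `T` containing `g`. Exchanging `g` for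
`g * h` gives another left transversal of `H`. Both sets meet the right coset `K g` exactly once,
and they agree away from `g` and `g * h`, so `g * h ∈ K g`, that is, `g * h * g⁻¹ ∈ K`
(`conj_mem_of_forall`). Thus `K` contains all conjugates of `H`; since the indices agree, `K` equals
`H`, which is therefore normal. Conversely, left and right cosets of a normal subgroup coincide.

The claim on `tp` follows because the minimum of numbers `≤ 1` is `1` iff all of them are `1`.
-/

open scoped Pointwise Classical

/-- `T` is simultaneously a left transversal for `H` (each left coset `gH` contains exactly one
element of `T`) and a right transversal for `K` (each right coset `Kg` contains exactly one
element of `T`). -/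
def IsDoubleTransversal {G : Type*} [Group G] (H K : Subgroup G) (T : Set G) : Prop :=
  (∀ g : G, ∃! t : G, t ∈ T ∧ g⁻¹ * t ∈ H) ∧ (∀ g : G, ∃! t : G, t ∈ T ∧ t * g⁻¹ ∈ K)

/-- `|DT_G(H,K)|`: the number of common transversals for the pair `(H, K)`. -/
noncomputable def numDT {G : Type*} [Group G] (H K : Subgroup G) : ℕ :=
  Nat.card {T : Set G // IsDoubleTransversal H K T}

/-- `P_G(H,K) = |DT_G(H,K)| / |H| ^ (G:H)`, the common transversal probability. -/
noncomputable def transProb {G : Type*} [Group G] (H K : Subgroup G) : ℚ :=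
  (numDT H K : ℚ) / (Nat.card H : ℚ) ^ H.index

/-- `tp(G)`: the minimum of `P_G(H) = P_G(H,H)` over all subgroups `H ≤ G`. -/
noncomputable def tp (G : Type*) [Group G] [Finite G] : ℚ :=
  haveI : Finite (Subgroup G) :=
    Finite.of_injective (fun H : Subgroup G => (H : Set G)) SetLike.coe_injective
  haveI : Fintype (Subgroup G) := Fintype.ofFinite _
  Finset.univ.inf' Finset.univ_nonempty (fun H : Subgroup G => transProb H H)

/-- `T` contains exactly one element of each left coset `gH`. -/
def IsLeftTransversal {G : Type*} [Group G] (H : Subgroup G) (T : Set G) : Prop :=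
  ∀ g : G, ∃! t : G, t ∈ T ∧ g⁻¹ * t ∈ H

/-- The set of elements `q.out * f q`, where `q` runs over the left cosets of `H`. It is described
as a set of fixed points so that membership can be tested on the coset of the element itself. -/
def transversalOf {G : Type*} [Group G] (H : Subgroup G) (f : G ⧸ H → H) : Set G :=
  {t | (t : G ⧸ H).out * (f (t : G ⧸ H) : G) = t}

lemma mk_out_mul {G : Type*} [Group G] (H : Subgroup G) (q : G ⧸ H) (h : H) :
    ((q.out * (h : G) : G) : G ⧸ H) = q := by
  rw [QuotientGroup.mk_mul_of_mem _ h.2, QuotientGroup.out_eq']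

lemma out_mul_mem_transversalOf {G : Type*} [Group G] (H : Subgroup G) (f : G ⧸ H → H)
    (q : G ⧸ H) : q.out * (f q : G) ∈ transversalOf H f := by
  simp only [transversalOf, Set.mem_ofPred_eq, mk_out_mul]

lemma isLeftTransversal_transversalOf {G : Type*} [Group G] (H : Subgroup G) (f : G ⧸ H → H) :
    IsLeftTransversal H (transversalOf H f) := by
  intro g
  refine ⟨(g : G ⧸ H).out * (f (g : G ⧸ H) : G), ⟨out_mul_mem_transversalOf H f _, ?_⟩, ?_⟩
  · rw [← QuotientGroup.eq, mk_out_mul]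
  · rintro t ⟨ht, hgt⟩
    rw [← QuotientGroup.eq] at hgt
    rw [hgt]
    exact ht.symm

lemma transversalOf_bijective {G : Type*} [Group G] (H : Subgroup G) :
    Function.Bijective (fun f : G ⧸ H → H =>
      (⟨transversalOf H f, isLeftTransversal_transversalOf H f⟩ :
        {T : Set G // IsLeftTransversal H T})) := by
  constructor
  · intro f f' hff
    have hset : transversalOf H f = transversalOf H f' := congrArg Subtype.val hff
    funext q
    have hq := out_mul_mem_transversalOf H f q
    rw [hset] at hq
    simp only [transversalOf, Set.mem_ofPred_eq, mk_out_mul] at hq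
    exact Subtype.ext (mul_left_cancel hq).symm
  · rintro ⟨T, hT⟩
    have hT2 := hT
    choose c hc hu using hT2
    refine ⟨fun q => ⟨q.out⁻¹ * c q.out, (hc q.out).2⟩, Subtype.ext (Set.ext fun t => ?_)⟩
    simp only [transversalOf, Set.mem_ofPred_eq, mul_inv_cancel_left]
    constructor
    · intro ht
      rw [← ht]
      exact (hc _).1
    · intro ht
      refine (hu _ t ⟨ht, ?_⟩).symm
      rw [← QuotientGroup.eq, QuotientGroup.out_eq']

lemma card_isLeftTransversal {G : Type*} [Group G] [Finite G] (H : Subgroup G) :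
    Nat.card {T : Set G // IsLeftTransversal H T} = Nat.card H ^ H.index := by
  rw [← Nat.card_congr (Equiv.ofBijective _ (transversalOf_bijective H)), Nat.card_fun]
  rfl

lemma numDT_le {G : Type*} [Group G] [Finite G] (H K : Subgroup G) :
    numDT H K ≤ Nat.card H ^ H.index := by
  rw [← card_isLeftTransversal]
  exact Nat.card_le_card_of_injective
    (fun T : {T : Set G // IsDoubleTransversal H K T} =>
      (⟨T.1, T.2.1⟩ : {T : Set G // IsLeftTransversal H T}))
    (fun _ _ h => Subtype.ext (Subtype.mk.inj h))

lemma numDT_eq_iff {G : Type*} [Group G] [Finite G] (H K : Subgroup G) :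
    numDT H K = Nat.card H ^ H.index ↔
      ∀ T : Set G, IsLeftTransversal H T → IsDoubleTransversal H K T := by
  rw [← card_isLeftTransversal]
  constructor
  · intro h T hT
    have hinj : Function.Injective (fun T : {T : Set G // IsDoubleTransversal H K T} =>
        (⟨T.1, T.2.1⟩ : {T : Set G // IsLeftTransversal H T})) :=
      fun _ _ h => Subtype.ext (Subtype.mk.inj h)
    obtain ⟨S, hS⟩ := (hinj.bijective_of_nat_card_le h.ge).2 ⟨T, hT⟩
    have hST : S.1 = T := congrArg Subtype.val hS
    exact hST ▸ S.2
  · intro h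
    exact Nat.card_congr (Equiv.subtypeEquivRight fun T => ⟨fun hT => hT.1, h T⟩)

lemma card_pow_index_pos {G : Type*} [Group G] [Finite G] (H : Subgroup G) :
    (0 : ℚ) < (Nat.card H : ℚ) ^ H.index :=
  pow_pos (Nat.cast_pos.mpr Nat.card_pos) _

lemma transProb_le_one {G : Type*} [Group G] [Finite G] (H K : Subgroup G) :
    transProb H K ≤ 1 := by
  rw [transProb, div_le_one (card_pow_index_pos H)]
  exact_mod_cast numDT_le H K

lemma transProb_eq_one_iff {G : Type*} [Group G] [Finite G] (H K : Subgroup G) :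
    transProb H K = 1 ↔
      ∀ T : Set G, IsLeftTransversal H T → IsDoubleTransversal H K T := by
  rw [← numDT_eq_iff, transProb, div_eq_one_iff_eq (card_pow_index_pos H).ne']
  norm_cast

lemma exists_isLeftTransversal_mem {G : Type*} [Group G] (H : Subgroup G) (g : G) :
    ∃ T : Set G, IsLeftTransversal H T ∧ g ∈ T := by
  -- Choose `g` in its own coset and the chosen representative `q.out` in every other coset.
  have hmem : (g : G ⧸ H).out⁻¹ * g ∈ H := by
    rw [← QuotientGroup.eq, QuotientGroup.out_eq']
  refine ⟨transversalOf H (fun q => if q = (g : G ⧸ H) then ⟨_, hmem⟩ else 1),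
    isLeftTransversal_transversalOf H _, ?_⟩
  simp [transversalOf]

/-- Replacing an element of a left transversal by another element of its left coset again gives a
left transversal. -/
lemma IsLeftTransversal.exchange {G : Type*} [Group G] {H : Subgroup G} {T : Set G}
    (hT : IsLeftTransversal H T) {g h : G} (hg : g ∈ T) (hh : h ∈ H) :
    IsLeftTransversal H (insert (g * h) (T \ {g})) := by
  intro x
  by_cases hx : x⁻¹ * g ∈ H
  · refine ⟨g * h, ⟨Set.mem_insert _ _, ?_⟩, ?_⟩
    · rw [← mul_assoc]
      exact H.mul_mem hx hh
    · rintro t ⟨rfl | ⟨htT, htg⟩, hxt⟩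
      · rfl
      · exact absurd ((hT x).unique ⟨htT, hxt⟩ ⟨hg, hx⟩) htg
  · obtain ⟨t, ⟨htT, hxt⟩, hu⟩ := hT x
    refine ⟨t, ⟨Or.inr ⟨htT, ?_⟩, hxt⟩, ?_⟩
    · rintro rfl
      exact hx hxt
    · rintro s ⟨rfl | ⟨hsT, -⟩, hxs⟩
      · rw [← mul_assoc] at hxs
        exact absurd ((H.mul_mem_cancel_right hh).1 hxs) hx
      · exact hu s ⟨hsT, hxs⟩

lemma conj_mem_of_forall {G : Type*} [Group G] {H K : Subgroup G}
    (hall : ∀ T : Set G, IsLeftTransversal H T → IsDoubleTransversal H K T)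
    (g h : G) (hh : h ∈ H) : g * h * g⁻¹ ∈ K := by
  obtain ⟨T, hT, hg⟩ := exists_isLeftTransversal_mem H g
  obtain ⟨t, ⟨ht, htK⟩, -⟩ := (hall _ (hT.exchange hg hh)).2 g
  rcases ht with rfl | ⟨htT, htg⟩
  · exact htK
  · have hgK : g * g⁻¹ ∈ K := by simp
    exact absurd (((hall T hT).2 g).unique ⟨htT, htK⟩ ⟨hg, hgK⟩) htg

lemma transProb_eq_one_iff_normal {G : Type*} [Group G] [Finite G] (H K : Subgroup G)
    (hHK : H.index = K.index) : transProb H K = 1 ↔ H = K ∧ H.Normal := by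
  rw [transProb_eq_one_iff]
  constructor
  · intro hall
    have hconj := conj_mem_of_forall hall
    have hle : H ≤ K := fun h hh => by simpa using hconj 1 h hh
    have hcard : Nat.card H = Nat.card K := by
      have hH := H.card_mul_index
      rw [← K.card_mul_index, hHK] at hH
      exact Nat.eq_of_mul_eq_mul_right (Nat.pos_of_ne_zero K.index_ne_zero_of_finite) hH
    have heq : H = K := Subgroup.eq_of_le_of_card_ge hle hcard.ge
    subst heq
    exact ⟨rfl, ⟨fun h hh g => hconj g h hh⟩⟩
  · rintro ⟨rfl, hN⟩ T hT
    refine ⟨hT, fun g => ?_⟩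
    simpa only [hN.mem_comm_iff (a := g⁻¹)] using hT g

theorem stmt3 (G : Type*) [Group G] [Finite G] :
    (∀ (H K : Subgroup G) (n : ℕ), H.index = n → K.index = n →
      (transProb H K = 1 ↔ H = K ∧ H.Normal)) ∧
    (tp G = 1 ↔ ∀ H : Subgroup G, H.Normal) := by
  refine ⟨fun H K n hH hK => transProb_eq_one_iff_normal H K (hH.trans hK.symm), ?_⟩
  have hself : ∀ H : Subgroup G, transProb H H = 1 ↔ H.Normal := fun H => by
    simpa using transProb_eq_one_iff_normal H H rfl
  simp only [← hself]
  unfold tp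
  constructor
  · intro h H
    refine le_antisymm (transProb_le_one H H) ?_
    rw [← h]
    apply Finset.inf'_le
    simp only [Finset.mem_univ]
  · intro h
    simp only [h, Finset.inf'_const]
end

section
/- Let G be a finite Frobenius group with Frobenius complement H (i.e. H is a nontrivial proper subgroup of G with H ∩ gHg⁻¹ = 1 for all g ∈ G \ H), let n = (G:H) and h = |H|. Then h divides n - 1 and P_G(H) = (h!/h^h)^{(n-1)/h}. -/
/-!
Every `g ∉ H` lies in a nontrivial double coset `H r H`, and the Frobenius condition makes the
expression `g = a * r * b` with `a b ∈ H` unique. Choosing representatives `r d` of the nontrivial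
double cosets `d ∈ D` therefore identifies `G ∖ H` with `D × H × H`, in such a way that `(d, a)`
determines the left coset of `a * r d * b` and `(d, b)` its right coset. Counting elements gives
`n = 1 + |D| * h`. A common transversal consists of one element of `H` together with, for each `d`,
the graph of a permutation of `H`, so there are `h * (h!) ^ |D|` of them
(`numDT_eq`), and the formula for `P_G(H)` follows.
-/

open scoped Pointwise Classical

/-- `G` is a Frobenius group with Frobenius complement `H`: `H` is a nontrivial proper subgroup
of `G` and `H ∩ gHg⁻¹ = 1` for every `g ∈ G` not in `H`. -/
def IsFrobeniusComplement {G : Type*} [Group G] (H : Subgroup G) : Prop :=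
  H ≠ ⊥ ∧ H ≠ ⊤ ∧ ∀ g : G, g ∉ H → H ⊓ MulAut.conj g • H = ⊥

/-- A family `r` of representatives of the nontrivial `(H, H)`-double cosets, each of which is
regular in the sense that `(a, b) ↦ a * r d * b` is injective on `H × H`. -/
structure IsRegularReps {G D : Type*} [Group G] (H : Subgroup G) (r : D → G) : Prop where
  notMem : ∀ d, r d ∉ H
  exists_eq : ∀ g, g ∉ H → ∃ (d : D) (a b : H), g = a * r d * b
  inj : ∀ (d d' : D) (a b a' b' : H), (a : G) * r d * b = a' * r d' * b' →
    d = d' ∧ a = a' ∧ b = b'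

/-- In a Frobenius group, the only element of `H` conjugated into `H` by some `g ∉ H` is `1`. -/
lemma IsFrobeniusComplement.eq_one {G : Type*} [Group G] {H : Subgroup G}
    (hf : IsFrobeniusComplement H) {g k : G} (hg : g ∉ H) (hk : k ∈ H)
    (hc : g * k * g⁻¹ ∈ H) : k = 1 := by
  have hmem : g * k * g⁻¹ ∈ H ⊓ MulAut.conj g • H :=
    ⟨hc, Subgroup.smul_mem_pointwise_smul k (MulAut.conj g) H hk⟩
  rw [hf.2.2 g hg, Subgroup.mem_bot] at hmem
  simpa using hmem

lemma exists_isRegularReps {G : Type*} [Group G] {H : Subgroup G}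
    (hf : IsFrobeniusComplement H) :
    ∃ (D : Set G), IsRegularReps H (fun d : D => (d : G)) := by
  let rep : G → G := fun g => (DoubleCoset.mk H H g).out
  have hrep : ∀ g, ∃ a b : H, g = a * rep g * b := by
    intro g
    obtain ⟨a, b, ha, hb, he⟩ := DoubleCoset.mk_out_eq_mul H H g
    refine ⟨⟨a⁻¹, H.inv_mem ha⟩, ⟨b⁻¹, H.inv_mem hb⟩, ?_⟩
    change g = a⁻¹ * (DoubleCoset.mk H H g).out * b⁻¹
    rw [he]
    group
  refine ⟨{g | g ∉ H ∧ rep g = g}, ⟨fun d => d.2.1, fun g hg => ?_, ?_⟩⟩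
  · obtain ⟨a, b, he⟩ := hrep g
    refine ⟨⟨rep g, fun hm => hg ?_, ?_⟩, a, b, he⟩
    · rw [he]
      exact H.mul_mem (H.mul_mem a.2 hm) b.2
    · change (DoubleCoset.mk H H (DoubleCoset.mk H H g).out).out = (DoubleCoset.mk H H g).out
      rw [DoubleCoset.out_eq']
  · rintro ⟨d, hd, hdr⟩ ⟨d', hd', hdr'⟩ a b a' b' he
    change (a : G) * d * b = a' * d' * b' at he
    have hdd : d = d' := by
      rw [← hdr, ← hdr']
      change (DoubleCoset.mk H H d).out = (DoubleCoset.mk H H d').out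
      refine congrArg Quotient.out ((DoubleCoset.eq H H d d').mpr ⟨a'⁻¹ * a, H.mul_mem (H.inv_mem a'.2) a.2, b * b'⁻¹,
        H.mul_mem b.2 (H.inv_mem b'.2), ?_⟩)
      have : d' = (a' : G)⁻¹ * (a * d * b) * (b' : G)⁻¹ := by rw [he]; group
      rw [this]
      push_cast
      group
    subst hdd
    have hconj : d * ((b : G) * (b' : G)⁻¹) * d⁻¹ = (a : G)⁻¹ * a' := by
      have : d * (b : G) = (a : G)⁻¹ * (a' * d * b') := by rw [← he]; group
      rw [← mul_assoc, this]
      group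
    have h1 : (b : G) * (b' : G)⁻¹ = 1 := by
      refine hf.eq_one hd (H.mul_mem b.2 (H.inv_mem b'.2)) ?_
      rw [hconj]
      exact H.mul_mem (H.inv_mem a.2) a'.2
    have hb : b = b' := Subtype.ext (mul_inv_eq_one.mp h1)
    subst hb
    refine ⟨rfl, Subtype.ext ?_, rfl⟩
    exact mul_right_cancel (mul_right_cancel he)

namespace IsRegularReps

variable {G D : Type*} [Group G] {H : Subgroup G} {r : D → G}

lemma mul_notMem (hr : IsRegularReps H r) (d : D) (a b : H) : (a : G) * r d * b ∉ H := by
  rw [H.mul_mem_cancel_right b.2, H.mul_mem_cancel_left a.2]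
  exact hr.notMem d

/-- The index of `H` is obtained by counting the elements of `G` in the coordinates
`H ⊔ (D × H × H)`. -/
lemma index_eq [Finite G] (hr : IsRegularReps H r) :
    H.index = 1 + Nat.card D * Nat.card H := by
  let f : D × H × H → {g : G // g ∉ H} := fun x => ⟨x.2.1 * r x.1 * x.2.2, hr.mul_notMem _ _ _⟩
  have hf : Function.Bijective f := by
    constructor
    · rintro ⟨d, a, b⟩ ⟨d', a', b'⟩ he
      obtain ⟨rfl, rfl, rfl⟩ := hr.inj d d' a b a' b' (congrArg Subtype.val he)
      rfl
    · rintro ⟨g, hg⟩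
      obtain ⟨d, a, b, rfl⟩ := hr.exists_eq g hg
      exact ⟨(d, a, b), rfl⟩
  have h1 := Nat.card_eq_of_bijective f hf
  have h2 : Nat.card G = Nat.card H + Nat.card {g : G // g ∉ H} := by
    rw [← Nat.card_congr (Equiv.sumCompl (fun g : G => g ∈ H)), Nat.card_sum]
  rw [Nat.card_prod, Nat.card_prod] at h1
  have h3 := H.index_mul_card
  have hpos : 0 < Nat.card H := Nat.card_pos
  apply Nat.eq_of_mul_eq_mul_right hpos
  rw [h3, h2, ← h1]
  ring

/-- For `x = (t, π)`, the set consisting of `t ∈ H` and, in each double coset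
`H (r d) H`, of the graph of the permutation `π d` of `H` in the coordinates
`(a, b) ↦ a * r d * b`. -/
def graphSet (r : D → G) (x : H × (D → Equiv.Perm H)) : Set G :=
  {g | g = x.1 ∨ ∃ (d : D) (a : H), g = a * r d * (x.2 d a : H)}

lemma mem_graphSet_of_mem (hr : IsRegularReps H r) (x : H × (D → Equiv.Perm H)) {g : G}
    (hg : g ∈ H) : g ∈ graphSet r x ↔ g = x.1 := by
  refine ⟨?_, Or.inl⟩
  rintro (he | ⟨d, a, rfl⟩)
  · exact he
  · exact absurd hg (hr.mul_notMem _ _ _)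

lemma mul_mem_graphSet (hr : IsRegularReps H r) (x : H × (D → Equiv.Perm H)) (d : D) (a b : H) :
    (a : G) * r d * b ∈ graphSet r x ↔ x.2 d a = b := by
  constructor
  · rintro (he | ⟨d', a', he⟩)
    · exact absurd (he ▸ x.1.2) (hr.mul_notMem d a b)
    · obtain ⟨rfl, rfl, rfl⟩ := hr.inj _ _ _ _ _ _ he
      rfl
  · rintro rfl
    exact Or.inr ⟨d, a, rfl⟩

lemma isDoubleTransversal_graphSet (hr : IsRegularReps H r) (x : H × (D → Equiv.Perm H)) :
    IsDoubleTransversal H H (graphSet r x) := by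
  constructor
  · intro g
    by_cases hg : g ∈ H
    · refine ⟨x.1, ⟨Or.inl rfl, H.mul_mem (H.inv_mem hg) x.1.2⟩, ?_⟩
      rintro t ⟨ht, htg⟩
      exact (hr.mem_graphSet_of_mem x ((H.mul_mem_cancel_left (H.inv_mem hg)).mp htg)).mp ht
    · obtain ⟨d, a, b, rfl⟩ := hr.exists_eq g hg
      refine ⟨a * r d * (x.2 d a : H), ⟨Or.inr ⟨d, a, rfl⟩, ?_⟩, ?_⟩
      · have : ((a : G) * r d * b)⁻¹ * (a * r d * (x.2 d a : H)) = (b : G)⁻¹ * (x.2 d a : H) := by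
          group
        rw [this]
        exact H.mul_mem (H.inv_mem b.2) (x.2 d a).2
      · rintro t ⟨ht, htg⟩
        obtain ⟨c, hc⟩ : ∃ c : H, t = a * r d * c :=
          ⟨b * ⟨_, htg⟩, by push_cast; group⟩
        subst hc
        rw [(hr.mul_mem_graphSet x d a c).mp ht]
  · intro g
    by_cases hg : g ∈ H
    · refine ⟨x.1, ⟨Or.inl rfl, H.mul_mem x.1.2 (H.inv_mem hg)⟩, ?_⟩
      rintro t ⟨ht, htg⟩
      exact (hr.mem_graphSet_of_mem x ((H.mul_mem_cancel_right (H.inv_mem hg)).mp htg)).mp ht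
    · obtain ⟨d, a, b, rfl⟩ := hr.exists_eq g hg
      refine ⟨((x.2 d).symm b : H) * r d * b, ⟨?_, ?_⟩, ?_⟩
      · exact (hr.mul_mem_graphSet x d _ b).mpr (by simp)
      · have : (((x.2 d).symm b : H) * r d * b) * ((a : G) * r d * b)⁻¹
            = ((x.2 d).symm b : H) * (a : G)⁻¹ := by
          group
        rw [this]
        exact H.mul_mem ((x.2 d).symm b).2 (H.inv_mem a.2)
      · rintro t ⟨ht, htg⟩
        obtain ⟨c, hc⟩ : ∃ c : H, t = c * r d * b :=
          ⟨⟨_, htg⟩ * a, by push_cast; group⟩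
        subst hc
        rw [← (hr.mul_mem_graphSet x d c b).mp ht, Equiv.symm_apply_apply]

lemma graphSet_injective (hr : IsRegularReps H r) :
    Function.Injective (graphSet r : H × (D → Equiv.Perm H) → Set G) := by
  rintro ⟨t, p⟩ ⟨t', p'⟩ he
  have h1 : (t : G) = t' := by
    refine (hr.mem_graphSet_of_mem (t', p') t.2).mp ?_
    rw [← he]
    exact Or.inl rfl
  have h2 : p = p' := by
    funext d
    ext1 a
    refine ((hr.mul_mem_graphSet (t', p') d a (p d a)).mp ?_).symm
    rw [← he]
    exact Or.inr ⟨d, a, rfl⟩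
  rw [Subtype.ext h1, h2]

lemma exists_graphSet_eq [Finite G] (hr : IsRegularReps H r) {T : Set G}
    (hT : IsDoubleTransversal H H T) :
    ∃ x : H × (D → Equiv.Perm H), graphSet r x = T := by
  obtain ⟨hL, hR⟩ := hT
  obtain ⟨t, ⟨htT, htH⟩, htu⟩ := hL 1
  rw [inv_one, one_mul] at htH
  have hex : ∀ (d : D) (a : H), ∃ b : H, (a : G) * r d * b ∈ T := by
    intro d a
    obtain ⟨s, ⟨hs, hsH⟩, -⟩ := hL (a * r d)
    refine ⟨⟨_, hsH⟩, ?_⟩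
    simpa only [mul_inv_cancel_left] using hs
  choose f hf using hex
  have hfu : ∀ (d : D) (a b : H), (a : G) * r d * b ∈ T → b = f d a := by
    intro d a b hb
    have := (hL (a * r d)).unique ⟨hb, by rw [inv_mul_cancel_left]; exact b.2⟩
      ⟨hf d a, by rw [inv_mul_cancel_left]; exact (f d a).2⟩
    exact Subtype.ext (mul_left_cancel this)
  have hinj : ∀ d, Function.Injective (f d) := by
    intro d a a' he
    have hmem : ∀ c : H, ((c : G) * r d * f d a) * (r d * f d a)⁻¹ ∈ H := by
      intro c
      have : ((c : G) * r d * f d a) * (r d * f d a)⁻¹ = c := by group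
      rw [this]
      exact c.2
    have := (hR (r d * f d a)).unique ⟨hf d a, hmem a⟩ ⟨he ▸ hf d a', hmem a'⟩
    exact Subtype.ext (mul_right_cancel (mul_right_cancel this))
  let x : H × (D → Equiv.Perm H) :=
    (⟨t, htH⟩, fun d => Equiv.ofBijective (f d) (Finite.injective_iff_bijective.mp (hinj d)))
  refine ⟨x, Set.ext fun g => ?_⟩
  by_cases hg : g ∈ H
  · rw [hr.mem_graphSet_of_mem x hg]
    constructor
    · rintro rfl
      exact htT
    · intro hgT
      exact htu g ⟨hgT, by simpa using hg⟩
  · obtain ⟨d, a, b, rfl⟩ := hr.exists_eq g hg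
    rw [hr.mul_mem_graphSet x]
    change f d a = b ↔ _
    constructor
    · rintro rfl
      exact hf d a
    · intro hb
      exact (hfu d a b hb).symm

lemma numDT_eq [Finite G] [Finite D] (hr : IsRegularReps H r) :
    numDT H H = Nat.card H * (Nat.card H).factorial ^ Nat.card D := by
  let F : H × (D → Equiv.Perm H) → {T : Set G // IsDoubleTransversal H H T} :=
    fun x => ⟨graphSet r x, hr.isDoubleTransversal_graphSet x⟩
  have hF : Function.Bijective F := by
    constructor
    · intro x y he
      exact hr.graphSet_injective (congrArg Subtype.val he)
    · rintro ⟨T, hT⟩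
      obtain ⟨x, hx⟩ := hr.exists_graphSet_eq hT
      exact ⟨x, Subtype.ext hx⟩
  rw [numDT, ← Nat.card_eq_of_bijective F hF, Nat.card_prod, Nat.card_fun, Nat.card_perm]

end IsRegularReps

theorem stmt4 {G : Type*} [Group G] [Finite G] (H : Subgroup G)
    (hfrob : IsFrobeniusComplement H) (n h : ℕ) (hn : H.index = n) (hh : Nat.card H = h) :
    h ∣ n - 1 ∧ transProb H H = ((h.factorial : ℚ) / (h : ℚ) ^ h) ^ ((n - 1) / h) := by
  subst hn hh
  obtain ⟨D, hr⟩ := exists_isRegularReps hfrob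
  have hidx := hr.index_eq
  have hpos : 0 < Nat.card H := Nat.card_pos
  have hsub : H.index - 1 = Nat.card D * Nat.card H := by omega
  refine ⟨hsub ▸ Dvd.intro_left _ rfl, ?_⟩
  rw [hsub, Nat.mul_div_cancel _ hpos, transProb, hr.numDT_eq, hidx]
  have hne : (Nat.card H : ℚ) ≠ 0 := by exact_mod_cast hpos.ne'
  push_cast
  rw [pow_add, pow_one, mul_div_mul_left _ _ hne, div_pow, ← pow_mul, mul_comm (Nat.card D)]
end

section
/- Let s ≥ 1 and let t_1, …, t_s be positive integers with t_1 + ⋯ + t_s = n. Then n!/n^n ≤ ∏_{σ=1}^s t_σ!/t_σ^{t_σ} ≤ ((n+s)/(2n))^n. Furthermore, if exactly m of the t_σ are equal to 1, then (n-m)!/(n-m)^{n-m} ≤ ∏_{σ=1}^s t_σ!/t_σ^{t_σ} ≤ (1/2)^{s-m}. -/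
/-!
Write `f t = t! / t ^ t`, with `f 0 = f 1 = 1`.

Both lower bounds come from `f (a + b) ≤ f a * f b`, which says that the single term
`a ^ a * b ^ b * (a + b).choose a` of the binomial expansion of `(a + b) ^ (a + b)` is at most the
whole sum. For the second one, the indices with `t σ = 1` are dropped first: they contribute the
factor `1`, and removing them lowers the sum from `n` to `n - m`.

The bound `((n + s) / (2 n)) ^ n` follows from `f t ≤ ((t + 1) / (2 t)) ^ t` (equivalently
`t! ≤ ((t + 1) / 2) ^ t`) and the AM-GM inequality with weights `t σ`, because
`∑ t σ * ((t σ + 1) / (2 t σ)) = (n + s) / 2`. The bound `(1 / 2) ^ (s - m)` follows from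
`f t ≤ 1 / 2` for `t ≥ 2`.
-/

/-- The quotient `t! / t ^ t`; its value at `0` is `1`. -/
def facRatio (t : ℕ) : ℚ := (t.factorial : ℚ) / (t : ℚ) ^ t

lemma facRatio_nonneg (t : ℕ) : 0 ≤ facRatio t := by
  unfold facRatio; positivity

lemma self_pow_pos (t : ℕ) : (0 : ℚ) < (t : ℚ) ^ t := by
  rcases Nat.eq_zero_or_pos t with rfl | h
  · simp
  · positivity

/-- Submultiplicativity: one term of the binomial expansion of `(a + b) ^ (a + b)` is at
most the whole sum. -/
lemma facRatio_add_le (a b : ℕ) : facRatio (a + b) ≤ facRatio a * facRatio b := by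
  have h1 : a ^ a * b ^ b * (a + b).choose a ≤ (a + b) ^ (a + b) := by
    rw [add_pow]
    have := Finset.single_le_sum
      (f := fun i => a ^ i * b ^ (a + b - i) * (a + b).choose i)
      (fun i _ => Nat.zero_le _)
      (show a ∈ Finset.range (a + b + 1) from Finset.mem_range.2 (by omega))
    simpa using this
  have h2 : (a + b).choose a * a.factorial * b.factorial = (a + b).factorial := by
    simpa using Nat.choose_mul_factorial_mul_factorial (Nat.le_add_right a b)
  unfold facRatio
  rw [div_mul_div_comm, div_le_div_iff₀ (self_pow_pos _)
    (mul_pos (self_pow_pos _) (self_pow_pos _))]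
  have h3 : (a + b).factorial * (a ^ a * b ^ b)
      ≤ a.factorial * b.factorial * (a + b) ^ (a + b) := by
    calc (a + b).factorial * (a ^ a * b ^ b)
        = a.factorial * b.factorial * (a ^ a * b ^ b * (a + b).choose a) := by rw [← h2]; ring
      _ ≤ _ := Nat.mul_le_mul_left _ h1
  exact_mod_cast h3

lemma facRatio_sum_le {ι : Type*} (S : Finset ι) (t : ι → ℕ) :
    facRatio (∑ i ∈ S, t i) ≤ ∏ i ∈ S, facRatio (t i) := by
  classical
  induction S using Finset.induction_on with
  | empty => simp [facRatio]
  | insert a S ha ih =>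
    rw [Finset.sum_insert ha, Finset.prod_insert ha]
    exact (facRatio_add_le _ _).trans (mul_le_mul_of_nonneg_left ih (facRatio_nonneg _))

lemma facRatio_le_half {t : ℕ} (h : 2 ≤ t) : facRatio t ≤ 1 / 2 := by
  have key : t.factorial * 2 ≤ t ^ t := by
    induction t, h using Nat.le_induction with
    | base => decide
    | succ k hk ih =>
      calc (k + 1).factorial * 2 = (k + 1) * (k.factorial * 2) := by
            rw [Nat.factorial_succ]; ring
        _ ≤ (k + 1) * (k + 1) ^ k :=
            Nat.mul_le_mul_left _ (ih.trans (Nat.pow_le_pow_left (Nat.le_succ k) k))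
        _ = (k + 1) ^ (k + 1) := by ring
  unfold facRatio
  rw [div_le_div_iff₀ (self_pow_pos _) (by norm_num)]
  have : (t.factorial : ℚ) * 2 ≤ (t : ℚ) ^ t := by exact_mod_cast key
  linarith

/-- The induction step is `2 * (t + 1) ^ (t + 1) ≤ (t + 2) ^ (t + 1)`, an instance of Bernoulli's
inequality. -/
lemma two_pow_mul_factorial_le (t : ℕ) : 2 ^ t * t.factorial ≤ (t + 1) ^ t := by
  induction t with
  | zero => simp
  | succ k ih =>
    have bern : 2 * (k + 1) ^ (k + 1) ≤ (k + 1 + 1) ^ (k + 1) := by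
      rw [add_pow (k + 1) 1 (k + 1), Finset.sum_range_succ, Finset.sum_range_succ]
      simp
      ring_nf
      omega
    calc 2 ^ (k + 1) * (k + 1).factorial = 2 * (k + 1) * (2 ^ k * k.factorial) := by
          rw [Nat.factorial_succ]; ring
      _ ≤ 2 * (k + 1) * (k + 1) ^ k := Nat.mul_le_mul_left _ ih
      _ = 2 * (k + 1) ^ (k + 1) := by ring
      _ ≤ _ := bern

lemma facRatio_le_pow {t : ℕ} (h : 0 < t) :
    facRatio t ≤ (((t : ℚ) + 1) / (2 * t)) ^ t := by
  unfold facRatio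
  have ht : (0 : ℚ) < t := by exact_mod_cast h
  rw [div_pow, mul_pow, div_le_div_iff₀ (by positivity) (by positivity)]
  have : (2 : ℚ) ^ t * t.factorial ≤ ((t : ℚ) + 1) ^ t := by
    exact_mod_cast two_pow_mul_factorial_le t
  calc (t.factorial : ℚ) * (2 ^ t * (t : ℚ) ^ t) = (2 ^ t * t.factorial) * (t : ℚ) ^ t := by ring
    _ ≤ _ := by gcongr

/-- The AM-GM inequality with natural number weights, free of roots. -/
lemma prod_pow_le_arith_mean_pow {ι : Type*} (S : Finset ι) (w : ι → ℕ) (z : ι → ℚ)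
    (hz : ∀ i ∈ S, 0 ≤ z i) (hw : 0 < ∑ i ∈ S, w i) :
    ∏ i ∈ S, z i ^ w i ≤ ((∑ i ∈ S, w i * z i) / (∑ i ∈ S, w i : ℕ)) ^ (∑ i ∈ S, w i) := by
  have hz' : ∀ i ∈ S, (0 : ℝ) ≤ (z i : ℝ) := fun i hi => by exact_mod_cast hz i hi
  have hw' : (0 : ℝ) < ∑ i ∈ S, (w i : ℝ) := by exact_mod_cast hw
  have h := Real.geom_mean_le_arith_mean S (fun i => (w i : ℝ)) (fun i => (z i : ℝ))
    (fun i _ => Nat.cast_nonneg _) hw' hz'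
  simp only [Real.rpow_natCast] at h
  have hP : (0 : ℝ) ≤ ∏ i ∈ S, (z i : ℝ) ^ w i :=
    Finset.prod_nonneg fun i hi => pow_nonneg (hz' i hi) _
  have h2 := pow_le_pow_left₀ (Real.rpow_nonneg hP _) h (∑ i ∈ S, w i)
  rw [← Nat.cast_sum, Real.rpow_inv_natCast_pow hP hw.ne'] at h2
  exact_mod_cast h2

theorem stmt6 (s : ℕ) (hs : 1 ≤ s) (t : Fin s → ℕ) (ht : ∀ σ, 0 < t σ)
    (n : ℕ) (hn : n = ∑ σ, t σ)
    (m : ℕ) (hm : m = (Finset.univ.filter fun σ => t σ = 1).card) :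
    ((n.factorial : ℚ) / (n : ℚ) ^ n ≤ ∏ σ, ((t σ).factorial : ℚ) / (t σ : ℚ) ^ t σ) ∧
    (∏ σ, ((t σ).factorial : ℚ) / (t σ : ℚ) ^ t σ ≤ (((n : ℚ) + s) / (2 * n)) ^ n) ∧
    (((n - m).factorial : ℚ) / ((n - m : ℕ) : ℚ) ^ (n - m) ≤
      ∏ σ, ((t σ).factorial : ℚ) / (t σ : ℚ) ^ t σ) ∧
    (∏ σ, ((t σ).factorial : ℚ) / (t σ : ℚ) ^ t σ ≤ (1 / 2 : ℚ) ^ (s - m)) := by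
  change facRatio n ≤ ∏ σ, facRatio (t σ) ∧ ∏ σ, facRatio (t σ) ≤ _ ∧
    facRatio (n - m) ≤ ∏ σ, facRatio (t σ) ∧ ∏ σ, facRatio (t σ) ≤ _
  have hsum : n - m = ∑ σ with ¬ t σ = 1, t σ := by
    have h1 := Finset.sum_filter_add_sum_filter_not Finset.univ (fun σ => t σ = 1) t
    have h2 : ∑ σ with t σ = 1, t σ = m := by
      rw [hm, Finset.card_eq_sum_ones]
      exact Finset.sum_congr rfl fun σ hσ => (Finset.mem_filter.1 hσ).2
    omega
  have hcard : (Finset.univ.filter fun σ => ¬ t σ = 1).card = s - m := by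
    have h1 := Finset.card_filter_add_card_filter_not (s := Finset.univ) (fun σ => t σ = 1)
    rw [Finset.card_univ, Fintype.card_fin] at h1
    omega
  have hprod : ∏ σ, facRatio (t σ) = ∏ σ with ¬ t σ = 1, facRatio (t σ) := by
    symm
    refine Finset.prod_subset (Finset.filter_subset _ _) fun σ _ hσ => ?_
    have : t σ = 1 := by simpa using hσ
    simp [this, facRatio]
  refine ⟨hn ▸ facRatio_sum_le _ t, ?_, ?_, ?_⟩
  · have hpos : 0 < ∑ σ, t σ :=
      Finset.sum_pos (fun σ _ => ht σ) ⟨⟨0, hs⟩, Finset.mem_univ _⟩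
    have hmean := prod_pow_le_arith_mean_pow Finset.univ t
      (fun σ => ((t σ : ℚ) + 1) / (2 * t σ)) (fun σ _ => by positivity) hpos
    have hterm : ∑ σ, (t σ : ℚ) * (((t σ : ℚ) + 1) / (2 * t σ)) = ((n : ℚ) + s) / 2 := by
      calc ∑ σ, (t σ : ℚ) * (((t σ : ℚ) + 1) / (2 * t σ)) = ∑ σ, ((t σ : ℚ) + 1) / 2 := by
            refine Finset.sum_congr rfl fun σ _ => ?_
            have : (t σ : ℚ) ≠ 0 := by exact_mod_cast (ht σ).ne'
            field_simp
        _ = _ := by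
            rw [← Finset.sum_div, Finset.sum_add_distrib, hn]
            simp
    rw [hterm, ← hn, div_div] at hmean
    exact (Finset.prod_le_prod (fun σ _ => facRatio_nonneg _)
      fun σ _ => facRatio_le_pow (ht σ)).trans hmean
  · rw [hsum, hprod]
    exact facRatio_sum_le _ t
  · rw [hprod, ← hcard, ← Finset.prod_const]
    refine Finset.prod_le_prod (fun σ _ => facRatio_nonneg _) fun σ hσ => facRatio_le_half ?_
    have h1 := (Finset.mem_filter.1 hσ).2
    have h2 := ht σ
    omega
end

section
/- Let G be a finite group and let H, K ≤ G be conjugate subgroups of index n in G with H not normal in G. Then (n-1)!/(n-1)^{n-1} ≤ P_G(H,K) ≤ 1/2. -/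
/-!
Every double coset `KgH` is a union of `d` left cosets of `H` and of `d` right cosets of `K`, and
inside it each of these left cosets meets each of these right cosets in the same number `|H| / d` of
elements. A common transversal therefore amounts to a choice, in each double coset, of one of the
`d!` matchings between left and right cosets and of one element in each of the `d` matched
intersections. Hence `P_G(H, K) = ∏ d! / d ^ d`, the product being over the double cosets
(`card_transversals_div`, `transProb_eq_prod`).

Write `f d = d! / d ^ d` (`bijProb`). The binomial theorem gives `f (x + y) ≤ f x * f y`
(`bijProb_add_le`). If `K = gHg⁻¹` then `KgH = gH` contributes `f 1 = 1`, and the other sizes sum to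
`n - 1`, which yields the lower bound `f (n - 1)`. If `H` is not normal, some double coset has
`d ≥ 2`, where `f d ≤ 1 / 2`; all other factors are at most `1`.
-/

open scoped Pointwise Classical

/-! ### Estimates for `d! / d ^ d` -/

/-- The probability `d! / d ^ d` that a uniformly random self-map of a `d`-element set is a
bijection. At `d = 0` it is `1`, since `0 ^ 0 = 1`. -/
def bijProb (d : ℕ) : ℚ := (d.factorial : ℚ) / (d : ℚ) ^ d

lemma pow_self_pos (d : ℕ) : (0 : ℚ) < (d : ℚ) ^ d := by
  rcases Nat.eq_zero_or_pos d with rfl | h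
  · simp
  · positivity

lemma bijProb_pos (d : ℕ) : 0 < bijProb d :=
  div_pos (by exact_mod_cast d.factorial_pos) (pow_self_pos d)

lemma bijProb_le_one (d : ℕ) : bijProb d ≤ 1 := by
  rw [bijProb, div_le_one (pow_self_pos d)]
  exact_mod_cast Nat.factorial_le_pow d

/-- This is `(x + y).choose y * x ^ x * y ^ y ≤ (x + y) ^ (x + y)`: the left side is a single term
of the binomial expansion of the right side. -/
lemma bijProb_add_le (x y : ℕ) : bijProb (x + y) ≤ bijProb x * bijProb y := by
  have key : (x + y).choose y * (x ^ x * y ^ y) ≤ (x + y) ^ (x + y) := by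
    rw [add_pow]
    have := Finset.single_le_sum
      (f := fun m => x ^ m * y ^ (x + y - m) * (x + y).choose m) (s := Finset.range (x + y + 1))
      (fun i _ => Nat.zero_le _) (a := x) (by simp)
    simp only [Nat.add_sub_cancel_left] at this
    rw [Nat.choose_symm_add] at this
    calc _ = _ := by ring
      _ ≤ _ := this
  have e := Nat.add_choose_mul_factorial_mul_factorial x y
  unfold bijProb
  rw [div_mul_div_comm, div_le_div_iff₀ (pow_self_pos _) (mul_pos (pow_self_pos _) (pow_self_pos _)),
    ← e]
  have key' : (((x + y).choose y : ℕ) : ℚ) * ((x : ℚ) ^ x * (y : ℚ) ^ y)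
      ≤ ((x + y : ℕ) : ℚ) ^ (x + y) := by exact_mod_cast key
  have h0 : (0 : ℚ) ≤ (x.factorial : ℚ) * y.factorial := by positivity
  push_cast at key' ⊢
  nlinarith [mul_le_mul_of_nonneg_left key' h0]

lemma bijProb_le_half {d : ℕ} (hd : 2 ≤ d) : bijProb d ≤ 1 / 2 := by
  obtain ⟨e, rfl⟩ := Nat.exists_eq_add_of_le hd
  have h2 : bijProb 2 = 1 / 2 := by norm_num [bijProb]
  calc bijProb (2 + e) ≤ bijProb 2 * bijProb e := bijProb_add_le 2 e
    _ ≤ 1 / 2 := by rw [h2]; linarith [bijProb_le_one e]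

lemma bijProb_sum_le {D : Type*} (s : Finset D) (d : D → ℕ) :
    bijProb (∑ i ∈ s, d i) ≤ ∏ i ∈ s, bijProb (d i) := by
  induction s using Finset.induction_on with
  | empty => simp [bijProb]
  | insert i s hi ih =>
    rw [Finset.sum_insert hi, Finset.prod_insert hi]
    exact (bijProb_add_le _ _).trans (mul_le_mul_of_nonneg_left ih (bijProb_pos _).le)

/-! ### Counting common transversals of two fibrations -/

section Count

variable {X A B D : Type*} [Fintype X] [Fintype A] [Fintype B] [Fintype D]

/-- A common transversal `T` of the fibres of `a` and `b` amounts to the bijection `A ≃ B` it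
induces, which lies over `D`, together with a point of `X` over each matched pair. -/
lemma card_transversals_eq_sum (a : X → A) (b : X → B) (p : A → D) (q : B → D)
    (hpq : ∀ x, p (a x) = q (b x)) :
    Nat.card {T : Set X // (∀ u, ∃! t, t ∈ T ∧ a t = u) ∧ (∀ v, ∃! t, t ∈ T ∧ b t = v)} =
      ∑ σ : {σ : A ≃ B // q ∘ σ = p}, ∏ u, Nat.card {x // a x = u ∧ b x = σ.1 u} := by
  simp_rw [← Nat.card_pi]
  rw [← Nat.card_sigma]
  symm
  refine Nat.card_congr (Equiv.ofBijective
    (fun w => ⟨Set.range fun u => (w.2 u).1, fun u => ?_, fun v => ?_⟩) ⟨?_, ?_⟩)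
  · refine ⟨(w.2 u).1, ⟨⟨u, rfl⟩, (w.2 u).2.1⟩, ?_⟩
    rintro _ ⟨⟨u', rfl⟩, h⟩
    obtain rfl : u' = u := (w.2 u').2.1.symm.trans h
    rfl
  · refine ⟨(w.2 (w.1.1.symm v)).1, ⟨⟨_, rfl⟩, by simp [(w.2 (w.1.1.symm v)).2.2]⟩, ?_⟩
    rintro _ ⟨⟨u', rfl⟩, h⟩
    obtain rfl : w.1.1 u' = v := (w.2 u').2.2.symm.trans h
    rw [Equiv.symm_apply_apply]
  · rintro ⟨⟨σ, hσ⟩, w⟩ ⟨⟨σ', hσ'⟩, w'⟩ h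
    have h1 : (Set.range fun u => (w u).1) = Set.range fun u => (w' u).1 := congrArg Subtype.val h
    have h2 : ∀ u, (w u).1 = (w' u).1 := by
      intro u
      obtain ⟨u', hu'⟩ : (w u).1 ∈ Set.range fun u => (w' u).1 := h1 ▸ ⟨u, rfl⟩
      obtain rfl : u' = u := by
        rw [← (w' u').2.1, ← (w u).2.1]; exact congrArg a hu'
      exact hu'.symm
    obtain rfl : σ = σ' := by
      ext u
      rw [← (w u).2.2, ← (w' u).2.2, h2]
    congr 1
    funext u
    exact Subtype.ext (h2 u)
  · rintro ⟨T, hA, hB⟩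
    choose t ht using fun u => (hA u).exists
    have inj : Function.Injective fun u => b (t u) := by
      intro u u' h
      have := (hB (b (t u))).unique ⟨(ht u).1, rfl⟩ ⟨(ht u').1, h.symm⟩
      rw [← (ht u).2, this, (ht u').2]
    have surj : Function.Surjective fun u => b (t u) := by
      intro v
      obtain ⟨x, hx, rfl⟩ := (hB v).exists
      exact ⟨a x, congrArg b ((hA (a x)).unique (ht _) ⟨hx, rfl⟩)⟩
    refine ⟨⟨⟨Equiv.ofBijective _ ⟨inj, surj⟩, ?_⟩, fun u => ⟨t u, (ht u).2, rfl⟩⟩, ?_⟩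
    · funext u
      change q (b (t u)) = p u
      rw [← hpq, (ht u).2]
    · apply Subtype.ext
      ext x
      constructor
      · rintro ⟨u, rfl⟩
        exact (ht u).1
      · intro hx
        exact ⟨a x, (hA (a x)).unique (ht _) ⟨hx, rfl⟩⟩

/-- Two families over `D` with equinumerous fibres are related by `∏ (fibre size)!` bijections
over `D`. -/
lemma card_equiv_over (p : A → D) (q : B → D)
    (hd : ∀ δ, Fintype.card {u // p u = δ} = Fintype.card {v // q v = δ}) :
    Fintype.card {σ : A ≃ B // q ∘ σ = p} =
      ∏ δ, (Fintype.card {u // p u = δ}).factorial := by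
  let σ₀ : A ≃ B := Equiv.ofFiberEquiv fun δ => Fintype.equivOfCardEq (hd δ)
  have h₀ : ∀ u, q (σ₀ u) = p u := fun u => Equiv.ofFiberEquiv_map _ u
  rw [← DomMulAct.stabilizer_card p]
  refine Fintype.card_congr ((Equiv.equivCongr (Equiv.refl A) σ₀.symm).subtypeEquiv fun σ => ?_)
  have h₁ : ∀ v, p (σ₀.symm v) = q v := fun v => by rw [← h₀]; simp
  simp [funext_iff, h₁]

lemma prod_comp_eq_prod_pow (p : A → D) (m : D → ℕ) :
    ∏ u, m (p u) = ∏ δ, m δ ^ Fintype.card {u // p u = δ} := by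
  rw [← Finset.prod_fiberwise' Finset.univ p m]
  simp [Fintype.card_subtype]

/-- Double counting: the fibre of `a` over `u` splits, along the points `v` with `q v = p u`, into
pieces of the same size `m (p u)`. -/
lemma card_fiber_eq_mul (a : X → A) (b : X → B) (p : A → D) (q : B → D)
    (hpq : ∀ x, p (a x) = q (b x)) (m : D → ℕ)
    (hm : ∀ u v, p u = q v → Nat.card {x // a x = u ∧ b x = v} = m (p u)) (u : A) :
    Nat.card {x // a x = u} = m (p u) * Fintype.card {v // q v = p u} := by
  have e : {x // a x = u} ≃ Σ v : {v // q v = p u}, {x // a x = u ∧ b x = v.1} :=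
    { toFun := fun x => ⟨⟨b x.1, by rw [← hpq, x.2]⟩, x.1, x.2, rfl⟩
      invFun := fun y => ⟨y.2.1, y.2.2.1⟩
      left_inv := fun x => rfl
      right_inv := by
        rintro ⟨⟨v, hv⟩, x, hx, hx'⟩
        dsimp only at hx'
        subst hx'
        rfl }
  rw [Nat.card_congr e, Nat.card_sigma,
    Finset.sum_congr rfl fun v _ => hm u v.1 v.2.symm]
  simp [mul_comm]

/-- When `X` is spread evenly over the pairs `(u, v)` with `p u = q v` in each fibre over `D`, the
proportion of common transversals among all transversals of `a` is a product of one
factor `d! / d ^ d` for each fibre of `p`, with `d` the size of that fibre. -/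
theorem card_transversals_div (a : X → A) (b : X → B) (p : A → D) (q : B → D)
    (hpq : ∀ x, p (a x) = q (b x)) (hp : Function.Surjective p) (hq : Function.Surjective q)
    (m : D → ℕ) (h : ℕ) (hh : 0 < h)
    (hm : ∀ u v, p u = q v → Nat.card {x // a x = u ∧ b x = v} = m (p u))
    (ha : ∀ u, Nat.card {x // a x = u} = h) (hb : ∀ v, Nat.card {x // b x = v} = h) :
    (Nat.card {T : Set X // (∀ u, ∃! t, t ∈ T ∧ a t = u) ∧ (∀ v, ∃! t, t ∈ T ∧ b t = v)} : ℚ) /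
      (h : ℚ) ^ Fintype.card A = ∏ δ, bijProb (Fintype.card {u // p u = δ}) := by
  have hqm : ∀ δ, h = m δ * Fintype.card {v // q v = δ} := by
    intro δ
    obtain ⟨u, rfl⟩ := hp δ
    rw [← ha u]
    exact card_fiber_eq_mul a b p q hpq m hm u
  have hpm : ∀ δ, h = m δ * Fintype.card {u // p u = δ} := by
    intro δ
    obtain ⟨v, rfl⟩ := hq δ
    rw [← hb v]
    refine card_fiber_eq_mul b a q p (fun x => (hpq x).symm) m (fun v u e => ?_) v
    rw [e, ← hm u v e.symm]
    exact Nat.card_congr (Equiv.subtypeEquivRight fun x => and_comm)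
  have hmpos : ∀ δ, 0 < m δ := fun δ =>
    Nat.pos_of_ne_zero fun h0 => by have := hpm δ; simp [h0] at this; omega
  have hd : ∀ δ, Fintype.card {u // p u = δ} = Fintype.card {v // q v = δ} := fun δ =>
    Nat.eq_of_mul_eq_mul_left (hmpos δ) ((hpm δ).symm.trans (hqm δ))
  have num : Nat.card {T : Set X // (∀ u, ∃! t, t ∈ T ∧ a t = u) ∧ (∀ v, ∃! t, t ∈ T ∧ b t = v)} =
      ∏ δ, ((Fintype.card {u // p u = δ}).factorial * m δ ^ Fintype.card {u // p u = δ}) := by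
    rw [card_transversals_eq_sum a b p q hpq, Finset.sum_congr rfl
      fun σ _ => Finset.prod_congr rfl fun u _ => hm u (σ.1 u) (congrFun σ.2 u).symm]
    rw [Finset.prod_mul_distrib, ← prod_comp_eq_prod_pow, ← card_equiv_over p q hd]
    simp
  have den : h ^ Fintype.card A =
      ∏ δ, (m δ * Fintype.card {u // p u = δ}) ^ Fintype.card {u // p u = δ} := by
    rw [← Finset.card_univ, ← Finset.prod_const, prod_comp_eq_prod_pow p fun _ => h]
    exact Finset.prod_congr rfl fun δ _ => congrArg (· ^ _) (hpm δ)
  rw [num, ← Nat.cast_pow, den, Nat.cast_prod, Nat.cast_prod, ← Finset.prod_div_distrib]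
  refine Finset.prod_congr rfl fun δ _ => ?_
  have h1 : (m δ : ℚ) ≠ 0 := by exact_mod_cast (hmpos δ).ne'
  have h2 := (pow_self_pos (Fintype.card {u // p u = δ})).ne'
  unfold bijProb
  push_cast
  rw [mul_pow]
  field_simp

end Count

/-! ### Cosets and double cosets -/

section Cosets

variable {G : Type*} [Group G]

/-- The double coset `KgH` containing a left coset `gH`. -/
def leftToDouble (H K : Subgroup G) : G ⧸ H → DoubleCoset.Quotient (K : Set G) (H : Set G) :=
  Quotient.lift (DoubleCoset.mk K H) fun x y hxy =>
    (DoubleCoset.eq K H x y).2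
      ⟨1, K.one_mem, x⁻¹ * y, QuotientGroup.leftRel_apply.1 hxy, by group⟩

/-- The double coset `KgH` containing a right coset `Kg`. -/
def rightToDouble (H K : Subgroup G) :
    Quotient (QuotientGroup.rightRel K) → DoubleCoset.Quotient (K : Set G) (H : Set G) :=
  Quotient.lift (DoubleCoset.mk K H) fun x y hxy =>
    (DoubleCoset.eq K H x y).2
      ⟨y * x⁻¹, QuotientGroup.rightRel_apply.1 hxy, 1, H.one_mem, by group⟩

/-- The size of `gH ∩ Kg'` depends only on the double coset containing `g` and `g'`: two such
intersections are matched by `x ↦ k * x * l` with `k ∈ K` and `l ∈ H`. -/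
lemma card_inter_eq (H K : Subgroup G) {r g g' : G}
    (hg : DoubleCoset.mk K H r = DoubleCoset.mk K H g)
    (hg' : DoubleCoset.mk K H r = DoubleCoset.mk K H g') :
    Nat.card {x : G // (x : G ⧸ H) = g ∧
        (Quotient.mk _ x : Quotient (QuotientGroup.rightRel K)) = Quotient.mk _ g'} =
      Nat.card {x : G // (x : G ⧸ H) = r ∧
        (Quotient.mk _ x : Quotient (QuotientGroup.rightRel K)) = Quotient.mk _ r} := by
  obtain ⟨k, hk, l, hl, rfl⟩ := (DoubleCoset.eq K H r g).1 hg
  obtain ⟨k', hk', l', hl', rfl⟩ := (DoubleCoset.eq K H r g').1 hg'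
  symm
  refine Nat.card_congr (((Equiv.mulLeft k).trans (Equiv.mulRight l')).subtypeEquiv fun x => ?_)
  simp only [QuotientGroup.eq, Quotient.eq, QuotientGroup.rightRel_apply, Equiv.trans_apply,
    Equiv.coe_mulLeft, Equiv.coe_mulRight]
  refine and_congr ?_ ?_
  · have : (k * x * l')⁻¹ * (k * r * l) = l'⁻¹ * (x⁻¹ * r) * l := by group
    rw [this, H.mul_mem_cancel_right hl, H.mul_mem_cancel_left (H.inv_mem hl')]
  · have : k' * r * l' * (k * x * l')⁻¹ = k' * (r * x⁻¹) * k⁻¹ := by group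
    rw [this, K.mul_mem_cancel_right (K.inv_mem hk), K.mul_mem_cancel_left hk']

lemma card_left_fiber (H : Subgroup G) (u : G ⧸ H) :
    Nat.card {x : G // (x : G ⧸ H) = u} = Nat.card H := by
  obtain ⟨g, rfl⟩ := QuotientGroup.mk_surjective u
  symm
  refine Nat.card_congr ((Equiv.mulLeft g).subtypeEquiv fun x => ?_)
  rw [eq_comm, QuotientGroup.eq]
  simp

lemma card_right_fiber (K : Subgroup G) (v : Quotient (QuotientGroup.rightRel K)) :
    Nat.card {x : G // (Quotient.mk _ x : Quotient (QuotientGroup.rightRel K)) = v} =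
      Nat.card K := by
  obtain ⟨g, rfl⟩ := Quotient.exists_rep v
  symm
  refine Nat.card_congr ((Equiv.mulRight g).subtypeEquiv fun x => ?_)
  rw [eq_comm, Quotient.eq, QuotientGroup.rightRel_apply]
  simp

/-- `P_G(H, K)` is the product of `d! / d ^ d` over the double cosets `KgH`, where `d` is the
number of left cosets of `H` in `KgH`. -/
theorem transProb_eq_prod [Fintype G] (H K : Subgroup G) (hcard : Nat.card K = Nat.card H)
    [Fintype (G ⧸ H)] [Fintype (DoubleCoset.Quotient (K : Set G) (H : Set G))] :
    transProb H K = ∏ δ, bijProb (Fintype.card {u // leftToDouble H K u = δ}) := by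
  have : Fintype (Quotient (QuotientGroup.rightRel K)) := Fintype.ofFinite _
  rw [← card_transversals_div (X := G) (fun x => (x : G ⧸ H))
    (fun x => (Quotient.mk _ x : Quotient (QuotientGroup.rightRel K)))
    (leftToDouble H K) (rightToDouble H K) (fun x => rfl)
    (fun δ => ⟨((Quotient.out δ : G) : G ⧸ H), Quotient.out_eq δ⟩)
    (fun δ => ⟨Quotient.mk _ (Quotient.out δ : G), Quotient.out_eq δ⟩)
    (fun δ => Nat.card {x : G // (x : G ⧸ H) = ((Quotient.out δ : G) : G ⧸ H) ∧
        (Quotient.mk _ x : Quotient (QuotientGroup.rightRel K)) =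
          Quotient.mk _ (Quotient.out δ : G)})
    (Nat.card H) Nat.card_pos ?_ (card_left_fiber H)
    (fun v => (card_right_fiber K v).trans hcard)]
  · unfold transProb numDT
    congr 1
    · congr 1
      refine Nat.card_congr (Equiv.subtypeEquivRight fun T => ?_)
      unfold IsDoubleTransversal
      refine and_congr ?_ ?_
      · rw [QuotientGroup.mk_surjective.forall]
        refine forall_congr' fun g => existsUnique_congr fun t => ?_
        rw [eq_comm (b := (g : G ⧸ H)), QuotientGroup.eq]
      · rw [Quotient.mk_surjective.forall]
        refine forall_congr' fun g => existsUnique_congr fun t => ?_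
        rw [eq_comm (b := Quotient.mk _ g), Quotient.eq, QuotientGroup.rightRel_apply]
    · rw [Subgroup.index, Nat.card_eq_fintype_card (α := G ⧸ H)]
  · intro u v huv
    obtain ⟨g, rfl⟩ := QuotientGroup.mk_surjective u
    obtain ⟨g', rfl⟩ := Quotient.exists_rep v
    have e : DoubleCoset.mk K H (Quotient.out (DoubleCoset.mk K H g)) = DoubleCoset.mk K H g :=
      Quotient.out_eq _
    exact card_inter_eq H K e (e.trans huv)

end Cosets

theorem stmt7 {G : Type*} [Group G] [Finite G] (H K : Subgroup G) (n : ℕ)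
    (hH : H.index = n) (hK : K.index = n)
    (hconj : ∃ g : G, MulAut.conj g • H = K) (hnn : ¬ H.Normal) :
    ((n - 1).factorial : ℚ) / ((n - 1 : ℕ) : ℚ) ^ (n - 1) ≤ transProb H K ∧
      transProb H K ≤ 1 / 2 := by
  have : Fintype G := Fintype.ofFinite G
  have : Fintype (G ⧸ H) := Fintype.ofFinite _
  have : Finite (DoubleCoset.Quotient (K : Set G) (H : Set G)) :=
    Finite.of_surjective (DoubleCoset.mk K H) Quotient.mk_surjective
  have : Fintype (DoubleCoset.Quotient (K : Set G) (H : Set G)) := Fintype.ofFinite _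
  obtain ⟨g, hg⟩ := hconj
  have memK : ∀ x, x ∈ K ↔ g⁻¹ * x * g ∈ H := by
    intro x
    rw [← hg, Subgroup.mem_pointwise_smul_iff_inv_smul_mem, ← map_inv]
    simp [MulAut.smul_def]
  have hcard : Nat.card K = Nat.card H := by
    have h1 := H.card_mul_index
    have h2 := K.card_mul_index
    rw [hK, ← hH, ← h1] at h2
    exact Nat.eq_of_mul_eq_mul_right (Nat.pos_of_ne_zero H.index_ne_zero_of_finite) h2
  rw [transProb_eq_prod H K hcard]
  set d : DoubleCoset.Quotient (K : Set G) (H : Set G) → ℕ :=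
    fun δ => Fintype.card {u // leftToDouble H K u = δ} with hd
  change bijProb (n - 1) ≤ ∏ δ, bijProb (d δ) ∧ ∏ δ, bijProb (d δ) ≤ 1 / 2
  have hsum : ∑ δ, d δ = n := by
    rw [← hH, Subgroup.index, Nat.card_eq_fintype_card, ← Fintype.card_sigma]
    exact Fintype.card_congr (Equiv.sigmaFiberEquiv _)
  constructor
  · -- As `K = gHg⁻¹`, the double coset `KgH` is the single left coset `gH`.
    have hone : d (DoubleCoset.mk K H g) = 1 := by
      rw [hd]
      refine Fintype.card_eq_one_iff.2 ⟨⟨(g : G ⧸ H), rfl⟩, ?_⟩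
      rintro ⟨u, hu⟩
      obtain ⟨x, rfl⟩ := QuotientGroup.mk_surjective u
      obtain ⟨k, hk, l, hl, rfl⟩ := (DoubleCoset.eq K H g x).1 hu.symm
      refine Subtype.ext ?_
      rw [eq_comm, QuotientGroup.eq]
      have := H.mul_mem ((memK k).1 hk) hl
      simpa [mul_assoc] using this
    rw [← Finset.mul_prod_erase _ _ (Finset.mem_univ (DoubleCoset.mk K H g)), hone]
    rw [← Finset.add_sum_erase _ _ (Finset.mem_univ (DoubleCoset.mk K H g)), hone] at hsum
    have h1 : bijProb 1 = 1 := by norm_num [bijProb]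
    rw [h1, one_mul, ← hsum, Nat.add_sub_cancel_left]
    exact bijProb_sum_le _ _
  · -- If every double coset were a single left coset, then `KxH = xH` for all `x`, so that every
    -- conjugate of `H` would lie in `H`.
    obtain ⟨δ, hδ⟩ : ∃ δ, 2 ≤ d δ := by
      by_contra! hlt
      refine hnn ⟨fun y hy x => ?_⟩
      have hk : g * y * g⁻¹ ∈ K := (memK _).2 (by simpa [mul_assoc] using hy)
      have hle : Fintype.card {u // leftToDouble H K u = DoubleCoset.mk K H (g * x⁻¹)} ≤ 1 :=
        Nat.le_of_lt_succ (hlt (DoubleCoset.mk K H (g * x⁻¹)))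
      have := Fintype.card_le_one_iff.1 hle ⟨((g * x⁻¹ : G) : G ⧸ H), rfl⟩
        ⟨((g * y * g⁻¹ * (g * x⁻¹) : G) : G ⧸ H),
          ((DoubleCoset.eq K H _ _).2 ⟨_, hk, 1, H.one_mem, (mul_one _).symm⟩).symm⟩
      have := QuotientGroup.eq.1 (congrArg Subtype.val this)
      simpa [mul_assoc] using this
    rw [← Finset.mul_prod_erase _ _ (Finset.mem_univ δ)]
    have h1 : ∏ i ∈ Finset.univ.erase δ, bijProb (d i) ≤ 1 :=
      Finset.prod_le_one (fun i _ => (bijProb_pos _).le) fun i _ => bijProb_le_one _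
    calc _ ≤ bijProb (d δ) * 1 := mul_le_mul_of_nonneg_left h1 (bijProb_pos _).le
      _ ≤ 1 / 2 := by rw [mul_one]; exact bijProb_le_half hδ
end

section
/- Let G be a finite group and let H, K ≤ G be subgroups with (G:H) = (G:K) = n such that at least one of H, K is not normal in G. Then P_G(H,K) ≤ (7/8)^n. In particular P_G(H,K) → 0 as n → ∞. -/
/-!
Join a left coset `a` of `H` to a right coset `b` of `K` by the elements of `a ∩ b`; a common
transversal is then a perfect matching `e` together with a choice of one element in each
`a ∩ e a`. Left multiplication by `K` permutes the left cosets inside a double coset `KgH`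
transitively and fixes each right coset, so if `KgH` holds `d` left cosets, each of them meets a
right coset of `KgH` in `|K| / d = |H| / d` elements (`card_inter_mul_le`). Any two matchings
differ by a permutation preserving the `K`-orbits on `G ⧸ H`, so the number of matchings is at most
the product of `d!` over the double cosets (`card_matchings_le`). Hence the probability is at most
the product of `d! / d ^ d`.

For `d ≥ 2` the factor is at most `(49 / 64) ^ d = (7 / 8) ^ (2 * d)` (`factorial_bound`), so it
suffices that at least half of the left cosets lie in double cosets with `d ≥ 2`, that is, at most
half of the points of `G ⧸ H` are fixed by `K`. A point fixed by `K` has stabilizer exactly `K`.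
If such a point exists, `K` is conjugate to `H`, hence not normal, and an element `y` not
normalizing `K` moves every fixed point to a non-fixed one (`card_fixed_le`).

Right cosets `Kg` are encoded throughout as left cosets `g⁻¹K`, elements of `G ⧸ K`.
-/

open scoped Pointwise Classical

open scoped Nat

theorem factorial_bound (d : ℕ) (hd : 2 ≤ d) : d ! * 64 ^ d ≤ 49 ^ d * d ^ d := by
  induction d, hd using Nat.le_induction with
  | base => decide
  | succ d hd ih =>
    -- Bernoulli's inequality in the form `2 * d ^ d ≤ (d + 1) ^ d`
    have h2 : 2 * d ^ d ≤ (d + 1) ^ d := by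
      have h := pow_add_mul_le_add_pow (a := d) (b := 1) (Nat.zero_le _) (by omega) d
      have h' : d * d ^ (d - 1) = d ^ d := mul_pow_sub_one (by omega) d
      simp only [Nat.cast_id, mul_one] at h
      omega
    calc (d + 1)! * 64 ^ (d + 1) = (d + 1) * 64 * (d ! * 64 ^ d) := by
          rw [Nat.factorial_succ]; ring
      _ ≤ (d + 1) * 64 * (49 ^ d * d ^ d) := Nat.mul_le_mul_left _ ih
      _ ≤ (d + 1) * 49 * 49 ^ d * (2 * d ^ d) := by
          nlinarith [Nat.zero_le ((d + 1) * (49 ^ d * d ^ d))]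
      _ ≤ (d + 1) * 49 * 49 ^ d * (d + 1) ^ d := Nat.mul_le_mul_left _ h2
      _ = 49 ^ (d + 1) * (d + 1) ^ (d + 1) := by ring

section

variable {G : Type*} [Group G]

/-- The double coset `KgH` of a left coset `gH`, encoded as the `K`-orbit of `gH`. -/
def dcoset (H K : Subgroup G) (a : G ⧸ H) : MulAction.orbitRel.Quotient K (G ⧸ H) :=
  Quotient.mk _ a

theorem dcoset_eq_iff (H K : Subgroup G) (a b : G ⧸ H) :
    dcoset H K a = dcoset H K b ↔ ∃ k : K, (k : G) • b = a := by
  unfold dcoset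
  rw [Quotient.eq]
  exact Iff.rfl

/-- The number of left cosets of `H` in the double coset containing `a`. -/
noncomputable def dsize (H K : Subgroup G) (a : G ⧸ H) : ℕ :=
  Nat.card {b : G ⧸ H // dcoset H K b = dcoset H K a}

/-- The set `a ∩ b` for a left coset `a` of `H` and a right coset `b` of `K`. -/
abbrev CosetInter (H K : Subgroup G) (a : G ⧸ H) (b : G ⧸ K) : Type _ :=
  {g : G // (g : G ⧸ H) = a ∧ ((g⁻¹ : G) : G ⧸ K) = b}

theorem card_inter_mul_le [Finite G] (H K : Subgroup G) (a : G ⧸ H) (b : G ⧸ K) :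
    Nat.card (CosetInter H K a b) * dsize H K a ≤ Nat.card K := by
  have hk : ∀ c : {c : G ⧸ H // dcoset H K c = dcoset H K a}, ∃ k : K, (k : G) • a = c.1 :=
    fun c => (dcoset_eq_iff H K _ _).1 c.2
  choose k hk using hk
  obtain ⟨y, rfl⟩ := QuotientGroup.mk_surjective b
  -- translating `a ∩ b` by `k c` lands in `c ∩ b`, and these sets are disjoint inside `b = K y⁻¹`
  have hmem : ∀ p : CosetInter H K a (y : G ⧸ K) × {c : G ⧸ H // dcoset H K c = dcoset H K a},
      (k p.2 : G) * p.1.1 * y ∈ K := by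
    intro p
    rw [mul_assoc]
    refine K.mul_mem (k p.2).2 ?_
    have := QuotientGroup.eq.1 p.1.2.2
    simpa using this
  rw [dsize, ← Nat.card_prod]
  refine Nat.card_le_card_of_injective (fun p => (⟨_, hmem p⟩ : K)) ?_
  intro p q hpq
  have h1 : (k p.2 : G) * p.1.1 = (k q.2 : G) * q.1.1 := by
    simpa using congrArg Subtype.val hpq
  have e : ∀ p : CosetInter H K a (y : G ⧸ K) × {c : G ⧸ H // dcoset H K c = dcoset H K a},
      (((k p.2 : G) * p.1.1 : G) : G ⧸ H) = p.2.1 := by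
    intro p
    rw [← hk p.2]
    exact congrArg (fun c : G ⧸ H => (k p.2 : G) • c) p.1.2.1
  have h2 : p.2 = q.2 := Subtype.ext (by rw [← e p, ← e q, h1])
  have h3 : p.1 = q.1 := Subtype.ext (by rw [h2] at h1; exact mul_left_cancel h1)
  exact Prod.ext h3 h2

/-- Perfect matchings between left cosets of `H` and right cosets of `K`, matched cosets
being required to intersect. -/
abbrev Matching (H K : Subgroup G) : Type _ :=
  {e : (G ⧸ H) ≃ (G ⧸ K) // ∀ a, Nonempty (CosetInter H K a (e a))}

theorem card_matchings_le [Finite G] (H K : Subgroup G)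
    [Fintype (MulAction.orbitRel.Quotient K (G ⧸ H))] :
    Nat.card (Matching H K) ≤
      ∏ q : MulAction.orbitRel.Quotient K (G ⧸ H), (Nat.card {a // dcoset H K a = q})! := by
  have : Fintype (G ⧸ H) := Fintype.ofFinite _
  rcases isEmpty_or_nonempty (Matching H K) with h | ⟨⟨e₀, h₀⟩⟩
  · simp
  have key : Nat.card {g : Equiv.Perm (G ⧸ H) // dcoset H K ∘ g = dcoset H K} =
      ∏ q : MulAction.orbitRel.Quotient K (G ⧸ H), (Nat.card {a // dcoset H K a = q})! := by
    rw [Nat.card_eq_fintype_card]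
    simp only [Nat.card_eq_fintype_card]
    convert DomMulAct.stabilizer_card (dcoset H K)
  rw [← key]
  have hpres : ∀ e : Matching H K, dcoset H K ∘ (e.1.trans e₀.symm) = dcoset H K := by
    intro e
    funext a
    obtain ⟨g, hg, hg'⟩ := e.2 a
    obtain ⟨g₁, hg₁, hg₁'⟩ := h₀ (e₀.symm (e.1 a))
    simp only [Equiv.apply_symm_apply] at hg₁'
    have hK : g₁ * g⁻¹ ∈ K := by
      have := QuotientGroup.eq.1 (hg₁'.trans hg'.symm)
      simpa using this
    simp only [Function.comp, Equiv.trans_apply]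
    rw [dcoset_eq_iff]
    refine ⟨⟨_, hK⟩, ?_⟩
    rw [← hg₁, ← hg]
    change ((g₁ * g⁻¹ * g : G) : G ⧸ H) = _
    simp
  refine Nat.card_le_card_of_injective (fun e => ⟨e.1.trans e₀.symm, hpres e⟩) ?_
  intro e e' h
  have h1 := congrArg Subtype.val h
  apply Subtype.ext
  ext a
  have := Equiv.congr_fun h1 a
  simpa using this

theorem numDT_le_s8 [Finite G] (H K : Subgroup G) [Fintype (Matching H K)] [Fintype (G ⧸ H)] :
    numDT H K ≤ ∑ e : Matching H K, ∏ a, Nat.card (CosetInter H K a (e.1 a)) := by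
  have hcard : Nat.card (Σ e : Matching H K, ∀ a, CosetInter H K a (e.1 a)) =
      ∑ e : Matching H K, ∏ a, Nat.card (CosetInter H K a (e.1 a)) := by
    rw [Nat.card_sigma]
    simp only [Nat.card_pi]
  rw [← hcard, numDT]
  -- A pair `(e, s)` gives back the transversal as the range of `s`, so it suffices that every
  -- common transversal is of this form.
  have hex : ∀ T : {T : Set G // IsDoubleTransversal H K T},
      ∃ p : (Σ e : Matching H K, ∀ a, CosetInter H K a (e.1 a)),
        T.1 = Set.range (fun a => (p.2 a).1) := by
    rintro ⟨T, hl, hr⟩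
    have hl' : ∀ a : G ⧸ H, ∃ t : G, t ∈ T ∧ (t : G ⧸ H) = a := by
      intro a
      obtain ⟨g, rfl⟩ := QuotientGroup.mk_surjective a
      obtain ⟨t, ⟨ht, h⟩, -⟩ := hl g
      exact ⟨t, ht, (QuotientGroup.eq.2 h).symm⟩
    have hlu : ∀ t ∈ T, ∀ t' ∈ T, (t : G ⧸ H) = t' → t = t' := by
      intro t ht t' ht' h
      exact (hl t).unique ⟨ht, by simp [H.one_mem]⟩ ⟨ht', QuotientGroup.eq.1 h⟩
    have hru : ∀ t ∈ T, ∀ t' ∈ T, ((t⁻¹ : G) : G ⧸ K) = (t'⁻¹ : G) → t = t' := by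
      intro t ht t' ht' h
      refine (hr t').unique ⟨ht, ?_⟩ ⟨ht', by simp [K.one_mem]⟩
      simpa using QuotientGroup.eq.1 h
    choose s hsT hs using hl'
    have hbij : Function.Bijective (fun a => (((s a)⁻¹ : G) : G ⧸ K)) := by
      constructor
      · intro a a' h
        rw [← hs a, ← hs a', hru _ (hsT a) _ (hsT a') h]
      · intro b
        obtain ⟨g, rfl⟩ := QuotientGroup.mk_surjective b
        obtain ⟨t, ⟨ht, h⟩, -⟩ := hr g⁻¹
        refine ⟨(t : G ⧸ H), ?_⟩
        have : s (t : G ⧸ H) = t := hlu _ (hsT _) _ ht (hs _)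
        simp only [this]
        apply QuotientGroup.eq.2
        simpa using h
    refine ⟨⟨⟨Equiv.ofBijective _ hbij, fun a => ⟨⟨s a, hs a, rfl⟩⟩⟩,
      fun a => ⟨s a, hs a, rfl⟩⟩, ?_⟩
    ext t
    constructor
    · intro ht
      exact ⟨(t : G ⧸ H), hlu _ (hsT _) _ ht (hs _)⟩
    · rintro ⟨a, rfl⟩
      exact hsT a
  choose F hF using hex
  have : ∀ e : Matching H K, Finite (∀ a, CosetInter H K a (e.1 a)) := fun e => inferInstance
  refine Nat.card_le_card_of_injective F ?_
  intro T T' h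
  apply Subtype.ext
  rw [hF T, hF T', h]

theorem dsize_pos [Finite G] (H K : Subgroup G) (a : G ⧸ H) : 0 < dsize H K a :=
  haveI : Nonempty {b : G ⧸ H // dcoset H K b = dcoset H K a} := ⟨⟨a, rfl⟩⟩
  Nat.card_pos

theorem fixed_of_dsize_eq_one (H K : Subgroup G) (a : G ⧸ H) (h : dsize H K a = 1)
    (k : G) (hk : k ∈ K) : k • a = a := by
  have hs := (Nat.card_eq_one_iff_unique.1 h).1
  have h1 : dcoset H K (k • a) = dcoset H K a := (dcoset_eq_iff H K _ _).2 ⟨⟨k, hk⟩, rfl⟩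
  exact congrArg Subtype.val (hs.elim ⟨k • a, h1⟩ ⟨a, rfl⟩)

theorem stabilizer_of_dsize_eq_one [Finite G] (H K : Subgroup G) (hHK : H.index = K.index)
    (a : G ⧸ H) (h : dsize H K a = 1) : MulAction.stabilizer G a = K := by
  have hle : K ≤ MulAction.stabilizer G a := fun k hk => fixed_of_dsize_eq_one H K a h k hk
  have hidx : (MulAction.stabilizer G a).index = K.index := by
    rw [MulAction.index_stabilizer_of_transitive, ← hHK]
    rfl
  symm
  apply Subgroup.eq_of_le_of_card_ge hle
  have h1 := K.card_mul_index
  have h2 := (MulAction.stabilizer G a).card_mul_index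
  rw [hidx, ← h1] at h2
  exact (Nat.eq_of_mul_eq_mul_right (Nat.pos_of_ne_zero K.index_ne_zero_of_finite) h2).le

theorem card_fixed_le [Finite G] (H K : Subgroup G) (hHK : H.index = K.index)
    (hnn : ¬ H.Normal ∨ ¬ K.Normal) :
    Nat.card {a : G ⧸ H // dsize H K a = 1} ≤ Nat.card {a : G ⧸ H // ¬ dsize H K a = 1} := by
  rcases isEmpty_or_nonempty {a : G ⧸ H // dsize H K a = 1} with h | ⟨⟨z, hz⟩⟩
  · simp
  have hzs := stabilizer_of_dsize_eq_one H K hHK z hz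
  have hKn : ¬ K.Normal := by
    intro hK
    obtain ⟨g, rfl⟩ := QuotientGroup.mk_surjective z
    have : H = K := by
      have h1 : MulAction.stabilizer G ((1 : G) : G ⧸ H) = H := MulAction.stabilizer_quotient H
      have h2 := MulAction.stabilizer_smul_eq_stabilizer_map_conj g⁻¹ (g : G ⧸ H)
      have h3 : g⁻¹ • (g : G ⧸ H) = ((1 : G) : G ⧸ H) := by
        change ((g⁻¹ * g : G) : G ⧸ H) = _
        simp
      rw [h3, h1, hzs] at h2
      rw [h2]
      exact Subgroup.Normal.map_conj_eq K g⁻¹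
    rcases hnn with h | h
    · exact h (this ▸ hK)
    · exact h hK
  obtain ⟨y, hy⟩ : ∃ y : G, K.map (MulAut.conj y).toMonoidHom ≠ K := by
    by_contra! hc
    refine hKn ⟨fun k hk g => ?_⟩
    rw [← hc g]
    exact ⟨k, hk, rfl⟩
  refine Nat.card_le_card_of_injective
    (fun a : {a : G ⧸ H // dsize H K a = 1} =>
      (⟨y • a.1, fun h => hy ?_⟩ : {a : G ⧸ H // ¬ dsize H K a = 1})) ?_
  · have h1 := MulAction.stabilizer_smul_eq_stabilizer_map_conj y a.1
    rw [stabilizer_of_dsize_eq_one H K hHK _ h, stabilizer_of_dsize_eq_one H K hHK _ a.2] at h1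
    exact h1.symm
  · intro a b hab
    have := congrArg Subtype.val hab
    exact Subtype.ext (MulAction.injective y this)

/-- The product of `d! / d ^ d` over double cosets, with denominators cleared, is bounded by
a factor `49 / 64` for each left coset in a double coset with `d ≥ 2`. -/
theorem prod_factorial_le [Finite G] (H K : Subgroup G)
    [Fintype (MulAction.orbitRel.Quotient K (G ⧸ H))] [Fintype (G ⧸ H)] :
    ((∏ q : MulAction.orbitRel.Quotient K (G ⧸ H), (Nat.card {a // dcoset H K a = q})! : ℕ) : ℚ) ≤
      ∏ a : G ⧸ H, ((if dsize H K a = 1 then 1 else 49 / 64 : ℚ) * dsize H K a) := by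
  rw [← Finset.prod_fiberwise Finset.univ (dcoset H K)]
  push_cast
  refine Finset.prod_le_prod (fun _ _ => by positivity) fun q _ => ?_
  set d := Nat.card {a // dcoset H K a = q} with hd
  have hc : (Finset.univ.filter fun a => dcoset H K a = q).card = d := by
    rw [hd, Nat.card_eq_fintype_card, Fintype.card_subtype]
  have hconst : ∏ a with dcoset H K a = q,
      ((if dsize H K a = 1 then 1 else 49 / 64 : ℚ) * dsize H K a) =
      ((if d = 1 then 1 else 49 / 64 : ℚ) * d) ^ d := by
    rw [← hc, ← Finset.prod_const, hc]
    refine Finset.prod_congr rfl fun a ha => ?_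
    have : dsize H K a = d := by
      rw [dsize, (Finset.mem_filter.1 ha).2]
    rw [this]
  rw [hconst]
  rcases Nat.lt_or_ge d 2 with h | h
  · interval_cases d <;> simp
  · rw [if_neg (by omega)]
    have := factorial_bound d h
    have h' : ((d ! : ℕ) : ℚ) * 64 ^ d ≤ 49 ^ d * (d : ℚ) ^ d := by exact_mod_cast this
    rw [mul_pow, div_pow, div_mul_eq_mul_div, le_div_iff₀ (by positivity)]
    exact h'

end

theorem stmt8 {G : Type*} [Group G] [Finite G] (H K : Subgroup G) (n : ℕ)
    (hH : H.index = n) (hK : K.index = n) (hnn : ¬ H.Normal ∨ ¬ K.Normal) :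
    transProb H K ≤ (7 / 8 : ℚ) ^ n := by
  have : Fintype (G ⧸ H) := Fintype.ofFinite _
  have : Fintype (Matching H K) := Fintype.ofFinite _
  have : Fintype (MulAction.orbitRel.Quotient K (G ⧸ H)) :=
    @Fintype.ofFinite _ (Quotient.finite _)
  have hHK : Nat.card H = Nat.card K := by
    have h1 := K.card_mul_index
    have h2 := H.card_mul_index
    rw [hH, ← h1, hK] at h2
    exact Nat.eq_of_mul_eq_mul_right
      (Nat.pos_of_ne_zero (hK ▸ K.index_ne_zero_of_finite)) h2
  have hn : Fintype.card (G ⧸ H) = n := by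
    rw [← hH, Subgroup.index, Nat.card_eq_fintype_card]
  set D : ℚ := ∏ a : G ⧸ H, (dsize H K a : ℚ) with hD
  have hDpos : 0 < D := Finset.prod_pos fun a _ => by exact_mod_cast dsize_pos H K a
  set c : ℚ := ∏ a : G ⧸ H, (if dsize H K a = 1 then 1 else 49 / 64 : ℚ) with hc
  have hcount : numDT H K * ∏ a : G ⧸ H, dsize H K a ≤
      Nat.card (Matching H K) * Nat.card H ^ n := by
    calc numDT H K * ∏ a : G ⧸ H, dsize H K a
        ≤ (∑ e : Matching H K, ∏ a, Nat.card (CosetInter H K a (e.1 a))) *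
            ∏ a : G ⧸ H, dsize H K a := Nat.mul_le_mul_right _ (numDT_le_s8 H K)
      _ = ∑ e : Matching H K, ∏ a, (Nat.card (CosetInter H K a (e.1 a)) * dsize H K a) := by
          rw [Finset.sum_mul]
          simp only [Finset.prod_mul_distrib]
      _ ≤ ∑ e : Matching H K, ∏ a : G ⧸ H, Nat.card H := by
          refine Finset.sum_le_sum fun e _ => Finset.prod_le_prod' fun a _ => ?_
          rw [hHK]
          exact card_inter_mul_le H K a (e.1 a)
      _ = Nat.card (Matching H K) * Nat.card H ^ n := by
          simp [hn]
  have hcountQ : (numDT H K : ℚ) * D ≤ Nat.card (Matching H K) * (Nat.card H : ℚ) ^ n := by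
    rw [hD]
    exact_mod_cast hcount
  have hmat : (Nat.card (Matching H K) : ℚ) ≤ c * D := by
    rw [hc, hD, ← Finset.prod_mul_distrib]
    exact le_trans (by exact_mod_cast card_matchings_le H K) (prod_factorial_le H K)
  have hcle : c ≤ (7 / 8 : ℚ) ^ n := by
    have hhalf := card_fixed_le H K (hH.trans hK.symm) hnn
    rw [Nat.card_eq_fintype_card, Nat.card_eq_fintype_card] at hhalf
    have hsum := Fintype.card_subtype_compl (fun a : G ⧸ H => dsize H K a = 1)
    rw [hn] at hsum
    have hle : n ≤ 2 * Fintype.card {a : G ⧸ H // ¬ dsize H K a = 1} := by omega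
    have hceq : c = (7 / 8 : ℚ) ^ (2 * Fintype.card {a : G ⧸ H // ¬ dsize H K a = 1}) := by
      rw [hc, Finset.prod_ite, Finset.prod_const_one, one_mul, Finset.prod_const,
        Fintype.card_subtype, pow_mul]
      norm_num
    rw [hceq]
    exact pow_le_pow_of_le_one (by norm_num) (by norm_num) hle
  have hpow : (0 : ℚ) < (Nat.card H : ℚ) ^ n := by
    have : 0 < Nat.card H := Nat.card_pos
    positivity
  rw [transProb, hH, div_le_iff₀ hpow]
  refine le_of_mul_le_mul_right ?_ hDpos
  calc (numDT H K : ℚ) * D ≤ Nat.card (Matching H K) * (Nat.card H : ℚ) ^ n := hcountQ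
    _ ≤ c * D * (Nat.card H : ℚ) ^ n := by gcongr
    _ ≤ (7 / 8 : ℚ) ^ n * D * (Nat.card H : ℚ) ^ n := by gcongr
    _ = (7 / 8 : ℚ) ^ n * (Nat.card H : ℚ) ^ n * D := by ring
end

section
/- Define f : (0,∞) → ℝ by f(x) = Γ(x+1)/x^x, where Γ is the Gamma function, and let c = (8/7)·f(4/3)^{3/4}. Then for every positive integer n and every positive integer s with s ≤ (3/4)·n, one has f(n/s)^s ≤ c^n · ((n+s)/(2n))^n. -/
/-!
Put `x = n / s ≥ 4/3` and `φ(x) = log Γ(x+1) - x log (x+1)`. After taking logarithms and dividing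
by `n`, the claim becomes `φ(x) / x ≤ φ(4/3) / (4/3)`. Since `φ(0) = 0`, this follows from
concavity of `φ` on `[0, ∞)`.

With `y = x + 1`, concavity of `log Γ(y) - (y-1) log y` is obtained from the Gauss product
`log Γ(y) = lim (y log n + log n! - ∑_{m ≤ n} log (y+m))`: each approximant minus `(y-1) log y`
is, by telescoping `(y+m) log (y+m)`, an affine function plus
`∑_{m < n} (y+m) log ((y+m+1)/(y+m))` plus `-(y+n) log (y+n)`, and all of these are concave;
the middle terms because `t log ((t+1)/t)` is a perspective of the logarithm.
-/

/-- `f(x) = Γ(x+1) / x^x` (real powers). -/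
noncomputable def fGamma (x : ℝ) : ℝ := Real.Gamma (x + 1) / x ^ x

lemma concaveOn_mul_log_succ_sub_log :
    ConcaveOn ℝ (Set.Ioi (0 : ℝ)) (fun t => t * (Real.log (t + 1) - Real.log t)) := by
  refine ⟨convex_Ioi 0, ?_⟩
  intro t ht s hs a b ha hb hab
  simp only [Set.mem_Ioi, smul_eq_mul] at *
  have hT : 0 < a * t + b * s := by
    have h := convex_Ioi (0 : ℝ) ht hs ha hb hab
    simpa using h
  have hlt : 0 < (t + 1) / t := by positivity
  have hls : 0 < (s + 1) / s := by positivity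
  -- The perspective argument: concavity of `log` with weights `a t / T` and `b s / T`.
  have key := strictConcaveOn_log_Ioi.concaveOn.2 (Set.mem_Ioi.2 hlt) (Set.mem_Ioi.2 hls)
    (show 0 ≤ a * t / (a * t + b * s) by positivity)
    (show 0 ≤ b * s / (a * t + b * s) by positivity) (by field_simp)
  simp only [smul_eq_mul] at key
  have harg : a * t / (a * t + b * s) * ((t + 1) / t) + b * s / (a * t + b * s) * ((s + 1) / s)
      = (a * t + b * s + 1) / (a * t + b * s) := by
    field_simp
    linear_combination hab
  rw [harg, Real.log_div (by positivity) hT.ne', Real.log_div (by positivity) ht.ne',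
    Real.log_div (by positivity) hs.ne'] at key
  have := mul_le_mul_of_nonneg_left key hT.le
  refine le_trans (le_of_eq ?_) this
  field_simp

lemma concaveOn_telescoped (n : ℕ) :
    ConcaveOn ℝ (Set.Ioi (0 : ℝ)) (fun y => (y + n) * Real.log (y + n) - y * Real.log y
      - ∑ m ∈ Finset.range n, Real.log (y + (m + 1))) := by
  induction n with
  | zero => simpa using concaveOn_const (0 : ℝ) (convex_Ioi (0 : ℝ))
  | succ n ih =>
    have h1 : ConcaveOn ℝ (Set.Ioi (0 : ℝ))
        (fun y => (y + n) * (Real.log (y + n + 1) - Real.log (y + n))) := by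
      refine ((concaveOn_mul_log_succ_sub_log.translate_left (n : ℝ)).subset ?_ (convex_Ioi 0))
      intro y hy
      have hy' : (0 : ℝ) < y := hy
      simpa using show -(n : ℝ) < y by have := n.cast_nonneg (α := ℝ); linarith
    refine (ih.add h1).congr ?_
    intro y _
    simp only [Pi.add_apply, Finset.sum_range_succ, Nat.cast_add, Nat.cast_one]
    rw [← add_assoc]
    ring

lemma concaveOn_logGammaSeq_sub (n : ℕ) :
    ConcaveOn ℝ (Set.Ioi (0 : ℝ))
      (fun y => Real.BohrMollerup.logGammaSeq y n - (y - 1) * Real.log y) := by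
  have h1 : ConcaveOn ℝ (Set.Ioi (0 : ℝ)) (fun y => Real.negMulLog (y + n)) := by
    refine ((Real.concaveOn_negMulLog.translate_left (n : ℝ)).subset ?_ (convex_Ioi 0))
    intro y hy
    have hy' : (0 : ℝ) < y := hy
    simpa using show -(n : ℝ) ≤ y by have := n.cast_nonneg (α := ℝ); linarith
  have h2 : ConcaveOn ℝ (Set.Ioi (0 : ℝ))
      (fun y : ℝ => y * Real.log n + Real.log (n.factorial)) := by
    refine ⟨convex_Ioi 0, ?_⟩
    intro t _ s _ a b _ _ hab
    simp only [smul_eq_mul]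
    apply le_of_eq
    linear_combination Real.log (n.factorial) * hab
  refine (((concaveOn_telescoped n).add h1).add h2).congr ?_
  intro y _
  simp only [Pi.add_apply, Real.negMulLog, Real.BohrMollerup.logGammaSeq,
    Finset.sum_range_succ', Nat.cast_add, Nat.cast_one, Nat.cast_zero, add_zero]
  ring

lemma concaveOn_log_Gamma_sub :
    ConcaveOn ℝ (Set.Ioi (0 : ℝ))
      (fun y => Real.log (Real.Gamma y) - (y - 1) * Real.log y) := by
  refine ⟨convex_Ioi 0, ?_⟩
  intro t ht s hs a b ha hb hab
  have hT := convex_Ioi (0 : ℝ) ht hs ha hb hab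
  have lim : ∀ y : ℝ, 0 < y → Filter.Tendsto
      (fun n => Real.BohrMollerup.logGammaSeq y n - (y - 1) * Real.log y) Filter.atTop
      (nhds (Real.log (Real.Gamma y) - (y - 1) * Real.log y)) := fun y hy =>
    (Real.BohrMollerup.tendsto_log_gamma hy).sub_const _
  exact le_of_tendsto_of_tendsto' (((lim t ht).const_smul a).add ((lim s hs).const_smul b))
    (lim _ hT) fun n => (concaveOn_logGammaSeq_sub n).2 ht hs ha hb hab

/-- `φ(x) / x ≤ φ(4/3) / (4/3)` for `φ(x) = log Γ(x+1) - x log (x+1)`, with the denominators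
cleared. -/
lemma log_Gamma_secant (x : ℝ) (hx : 4 / 3 ≤ x) :
    Real.log (Real.Gamma (x + 1)) - x * Real.log (x + 1) ≤
      x * (3 / 4 * Real.log (Real.Gamma (4 / 3 + 1)) - Real.log (4 / 3 + 1)) := by
  have hx0 : 0 < x := by linarith
  have hw : 4 / 3 / x ≤ 1 := by rw [div_le_one hx0]; exact hx
  -- `4/3 + 1` is the convex combination of `x + 1` and `1` with weights `(4/3)/x`, `1 - (4/3)/x`.
  have key := concaveOn_log_Gamma_sub.2 (show x + 1 ∈ Set.Ioi (0 : ℝ) from by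
    simp only [Set.mem_Ioi]; linarith) (Set.mem_Ioi.2 one_pos)
    (show 0 ≤ 4 / 3 / x by positivity) (sub_nonneg.2 hw) (by ring)
  have harg : 4 / 3 / x * (x + 1) + (1 - 4 / 3 / x) * 1 = 4 / 3 + 1 := by
    field_simp
    ring
  simp only [smul_eq_mul, harg, Real.Gamma_one, Real.log_one, sub_self, mul_zero, add_zero,
    add_sub_cancel_right] at key
  have h2 := mul_le_mul_of_nonneg_left key (show 0 ≤ 3 / 4 * x by positivity)
  have e : 3 / 4 * x * (4 / 3 / x * (Real.log (Real.Gamma (x + 1)) - x * Real.log (x + 1)))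
      = Real.log (Real.Gamma (x + 1)) - x * Real.log (x + 1) := by
    field_simp
  rw [e] at h2
  linarith

lemma fGamma_pos {x : ℝ} (hx : 0 < x) : 0 < fGamma x :=
  div_pos (Real.Gamma_pos_of_pos (by linarith)) (Real.rpow_pos_of_pos hx x)

lemma log_fGamma {x : ℝ} (hx : 0 < x) :
    Real.log (fGamma x) = Real.log (Real.Gamma (x + 1)) - x * Real.log x := by
  unfold fGamma
  rw [Real.log_div (Real.Gamma_pos_of_pos (by linarith)).ne' (Real.rpow_pos_of_pos hx x).ne',
    Real.log_rpow hx]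

theorem stmt9 (c : ℝ) (hc : c = (8 / 7) * fGamma (4 / 3) ^ ((3 : ℝ) / 4)) :
    ∀ n s : ℕ, 0 < n → 0 < s → (s : ℝ) ≤ (3 / 4) * n →
      fGamma ((n : ℝ) / s) ^ (s : ℕ) ≤ c ^ n * (((n : ℝ) + s) / (2 * n)) ^ n := by
  intro n s hn hs hns
  have hn' : (0 : ℝ) < n := by exact_mod_cast hn
  have hs' : (0 : ℝ) < s := by exact_mod_cast hs
  obtain ⟨x, hxdef⟩ : ∃ x : ℝ, x = (n : ℝ) / s := ⟨_, rfl⟩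
  have hnx : (n : ℝ) = s * x := by rw [hxdef]; field_simp
  have hx : 4 / 3 ≤ x := by rw [hxdef, le_div_iff₀ hs']; linarith
  have hx0 : 0 < x := by linarith
  have hf := fGamma_pos (show (0 : ℝ) < 4 / 3 by norm_num)
  have hfr : 0 < fGamma (4 / 3) ^ ((3 : ℝ) / 4) := Real.rpow_pos_of_pos hf _
  have hcpos : 0 < c := by rw [hc]; positivity
  have hfrac : ((n : ℝ) + s) / (2 * n) = (x + 1) / (2 * x) := by
    rw [hnx]; field_simp
  rw [← hxdef, hfrac]
  have hfx := fGamma_pos hx0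
  rw [← Real.log_le_log_iff (by positivity) (by positivity),
    Real.log_mul (by positivity) (by positivity), Real.log_pow, Real.log_pow, Real.log_pow,
    log_fGamma hx0, hc, Real.log_mul (by norm_num) hfr.ne', Real.log_rpow hf,
    log_fGamma (by norm_num), Real.log_div (x := x + 1) (by positivity) (by positivity),
    Real.log_mul (by norm_num) hx0.ne', hnx]
  have hconst : Real.log (8 / 7) + Real.log (4 / 3 + 1) = Real.log (4 / 3) + Real.log 2 := by
    rw [← Real.log_mul (by norm_num) (by norm_num), ← Real.log_mul (by norm_num) (by norm_num)]
    norm_num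
  have h := mul_le_mul_of_nonneg_left (log_Gamma_secant x hx) hs'.le
  linear_combination h - s * x * hconst
end

section
/- Let K ≤ H ≤ G be finite groups (K a subgroup of H and H a subgroup of G). Then P_G(K) ≤ P_H(K), where P_G(K) is the common transversal probability of K in G and P_H(K) is the common transversal probability of K in H. -/
/-!
A common transversal `T` of `K` in `G` splits along `H`. Since `K ≤ H`, the subgroup `H` is a union
of left (and of right) cosets of `K`, so `T ∩ H` is a common transversal of `K` in `H`
(`IsDoubleTransversal.restrict`), while `T \ H` is determined by choosing one element in each left
coset of `K` outside `H`. With `n = (G : K)` and `m = (H : K)` there are `n - m` such cosets, so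
`|DT_G(K)| ≤ |DT_H(K)| * |K| ^ (n - m)` (`numDT_mul_pow_le`). Dividing by `|K| ^ n` gives the claim.
-/

open scoped Pointwise Classical

theorem IsDoubleTransversal.restrict {G : Type*} [Group G] {H K : Subgroup G} (hKH : K ≤ H)
    {T : Set G} (hT : IsDoubleTransversal K K T) :
    IsDoubleTransversal (K.subgroupOf H) (K.subgroupOf H) ((↑) ⁻¹' T : Set H) := by
  constructor
  · intro g
    obtain ⟨t, ⟨htT, htK⟩, hu⟩ := hT.1 g
    have htH : t ∈ H := by simpa using H.mul_mem g.2 (hKH htK)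
    exact ⟨⟨t, htH⟩, ⟨htT, htK⟩, fun s hs => Subtype.ext (hu s ⟨hs.1, hs.2⟩)⟩
  · intro g
    obtain ⟨t, ⟨htT, htK⟩, hu⟩ := hT.2 g
    have htH : t ∈ H := by simpa using H.mul_mem (hKH htK) g.2
    exact ⟨⟨t, htH⟩, ⟨htT, htK⟩, fun s hs => Subtype.ext (hu s ⟨hs.1, hs.2⟩)⟩

/-- The left cosets of `K` in `H`, viewed as left cosets of `K` in `G`. -/
noncomputable def cosetIncl {G : Type*} [Group G] (H K : Subgroup G) :
    H ⧸ K.subgroupOf H → G ⧸ K :=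
  fun q => ((q.out : H) : G)

theorem cosetIncl_injective {G : Type*} [Group G] (H K : Subgroup G) :
    Function.Injective (cosetIncl H K) := by
  intro a b hab
  have h : ((a.out : H) : G)⁻¹ * ((b.out : H) : G) ∈ K := QuotientGroup.eq.1 hab
  rw [← QuotientGroup.out_eq' a, ← QuotientGroup.out_eq' b]
  exact QuotientGroup.eq.2 h

theorem mem_of_mk_mem_range {G : Type*} [Group G] {H K : Subgroup G} (hKH : K ≤ H) {t : G}
    (ht : (t : G ⧸ K) ∈ Set.range (cosetIncl H K)) : t ∈ H := by
  obtain ⟨a, ha⟩ := ht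
  have h : ((a.out : H) : G)⁻¹ * t ∈ K := QuotientGroup.eq.1 ha
  simpa using H.mul_mem (a.out : H).2 (hKH h)

theorem card_compl_range_cosetIncl {G : Type*} [Group G] [Finite G] (H K : Subgroup G) :
    (K.subgroupOf H).index + Nat.card ↥(Set.range (cosetIncl H K))ᶜ = K.index := by
  rw [Subgroup.index, ← Nat.card_range_of_injective (cosetIncl_injective H K),
    Nat.card_coe_set_eq, Nat.card_coe_set_eq, Set.ncard_add_ncard_compl, Subgroup.index]

/-- A common transversal in `G` is determined by its trace on `H` and by the position of its
representative in each left coset of `K` outside `H`, recorded relative to the base point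
`q.out` as an element of `K`. -/
theorem numDT_mul_pow_le {G : Type*} [Group G] [Finite G] (H K : Subgroup G) (hKH : K ≤ H) :
    numDT K K ≤ numDT (K.subgroupOf H) (K.subgroupOf H) *
      Nat.card K ^ Nat.card ↥(Set.range (cosetIncl H K))ᶜ := by
  choose c hc hu using
    fun T : {T : Set G // IsDoubleTransversal K K T} => T.2.1
  let φ : {T : Set G // IsDoubleTransversal K K T} →
      {T : Set H // IsDoubleTransversal (K.subgroupOf H) (K.subgroupOf H) T} ×
        (↥(Set.range (cosetIncl H K))ᶜ → K) :=
    fun T => (⟨_, T.2.restrict hKH⟩, fun q => ⟨q.1.out⁻¹ * c T q.1.out, (hc T _).2⟩)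
  have key : ∀ T₁ T₂, φ T₁ = φ T₂ → T₁.1 ⊆ T₂.1 := by
    intro T₁ T₂ h t ht
    by_cases htH : t ∈ H
    · have h1 : ((↑) ⁻¹' T₁.1 : Set H) = (↑) ⁻¹' T₂.1 := congrArg (fun p => p.1.1) h
      have h2 : (⟨t, htH⟩ : H) ∈ ((↑) ⁻¹' T₁.1 : Set H) := ht
      rw [h1] at h2
      exact h2
    · let q : ↥(Set.range (cosetIncl H K))ᶜ :=
        ⟨(t : G ⧸ K), fun hq => htH (mem_of_mk_mem_range hKH hq)⟩
      have h1 : q.1.out⁻¹ * c T₁ q.1.out = q.1.out⁻¹ * c T₂ q.1.out :=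
        congrArg (fun p => ((p.2 q : K) : G)) h
      have h2 : t = c T₁ q.1.out :=
        hu T₁ _ t ⟨ht, QuotientGroup.eq.1 (QuotientGroup.out_eq' q.1)⟩
      rw [h2, mul_left_cancel h1]
      exact (hc T₂ _).1
  have hφ : Function.Injective φ := fun T₁ T₂ h =>
    Subtype.ext ((key T₁ T₂ h).antisymm (key T₂ T₁ h.symm))
  have := Nat.card_le_card_of_injective φ hφ
  rwa [Nat.card_prod, Nat.card_fun] at this

theorem stmt10 {G : Type*} [Group G] [Finite G] (H K : Subgroup G) (hKH : K ≤ H) :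
    transProb K K ≤ transProb (K.subgroupOf H) (K.subgroupOf H) := by
  have hcard : Nat.card (K.subgroupOf H) = Nat.card K :=
    Nat.card_congr (Subgroup.subgroupOfEquivOfLe hKH).toEquiv
  have hpos : (0 : ℚ) < Nat.card K := by exact_mod_cast Nat.card_pos
  have hle : (numDT K K : ℚ) ≤ numDT (K.subgroupOf H) (K.subgroupOf H) *
      (Nat.card K : ℚ) ^ Nat.card ↥(Set.range (cosetIncl H K))ᶜ := by
    exact_mod_cast numDT_mul_pow_le H K hKH
  unfold transProb
  rw [hcard, ← card_compl_range_cosetIncl H K, pow_add, div_le_div_iff₀ (by positivity)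
    (by positivity)]
  calc _ ≤ _ := mul_le_mul_of_nonneg_right hle (by positivity)
    _ = _ := by ring
end

section
/- Let G and K be finite groups, let f : G → K be a group homomorphism, and let H ≤ G be a subgroup containing the kernel of f. Then P_G(H) = P_{f(G)}(f(H)), where f(G) is the image of f and f(H) ≤ f(G) is the image of H under f. -/
/-!
Factoring `f` through its image, one may assume that `f = φ : G → Q` is surjective and that
`H = φ⁻¹(L)` with `L = f(H)`. Left cosets of `H` correspond to left cosets of `L`, so a common
transversal of `H` is the same thing as a map `s : Q ⧸ L → G` such that `φ ∘ s` is a section of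
`Q → Q ⧸ L` meeting every right coset of `L` exactly once (`card_transversals`). This condition
depends on `φ ∘ s` only, and each of the `n = (Q : L)` values of `φ ∘ s` has `|ker φ|` lifts to
`G`, so `numDT H H = numDT L L * |ker φ| ^ n` (`numDT_comap`). Since `|H| = |L| * |ker φ|` and
`(G : H) = n`, the factor `|ker φ| ^ n` cancels in the quotient.
-/

open scoped Pointwise Classical

/-- The map `r : Q ⧸ L → Q` picks a point of each left coset of `L`, and its values meet each right
coset of `L` exactly once: such maps parametrize the common transversals of `L`. -/
def IsDTSection {Q : Type*} [Group Q] (L : Subgroup Q) (r : Q ⧸ L → Q) : Prop :=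
  (∀ q, (r q : Q ⧸ L) = q) ∧ ∀ g : Q, ∃! q, r q * g⁻¹ ∈ L

/-- Common transversals of `φ⁻¹(L)` are the images of the lifts along `φ` of the maps satisfying
`IsDTSection L`. -/
theorem card_transversals {G Q : Type*} [Group G] [Group Q] (φ : G →* Q)
    (hφ : Function.Surjective φ) (L : Subgroup Q) :
    numDT (L.comap φ) (L.comap φ) = Nat.card {s : Q ⧸ L → G // IsDTSection L (φ ∘ s)} := by
  symm
  have key : ∀ s : Q ⧸ L → G, IsDTSection L (φ ∘ s) →
      IsDoubleTransversal (L.comap φ) (L.comap φ) (Set.range s) := by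
    rintro s ⟨h1, h2⟩
    refine ⟨fun g => ⟨s (φ g : Q), ⟨⟨_, rfl⟩, ?_⟩, ?_⟩, fun g => ?_⟩
    · have := h1 (φ g : Q)
      simpa using QuotientGroup.eq.1 this.symm
    · rintro _ ⟨⟨q, rfl⟩, hq⟩
      have hq' : ((φ g : Q) : Q ⧸ L) = ((φ (s q) : Q) : Q ⧸ L) :=
        QuotientGroup.eq.2 (by simpa using hq)
      rw [hq']
      exact congrArg s (h1 q).symm
    · obtain ⟨q, hq, hu⟩ := h2 (φ g)
      refine ⟨s q, ⟨⟨q, rfl⟩, by simpa using hq⟩, ?_⟩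
      rintro _ ⟨⟨q', rfl⟩, hq'⟩
      rw [hu q' (by simpa using hq')]
  refine Nat.card_congr (Equiv.ofBijective (fun s => ⟨Set.range s.1, key s.1 s.2⟩) ⟨?_, ?_⟩)
  · rintro ⟨s, hs⟩ ⟨s', hs'⟩ h
    have h' : Set.range s = Set.range s' := congrArg Subtype.val h
    refine Subtype.ext (funext fun q => ?_)
    obtain ⟨q', hq'⟩ : s q ∈ Set.range s' := h' ▸ ⟨q, rfl⟩
    have e1 := hs.1 q
    have e2 := hs'.1 q'
    simp only [Function.comp] at e1 e2
    rw [hq', e1] at e2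
    subst e2
    exact hq'.symm
  · rintro ⟨T, hT1, hT2⟩
    have hex : ∀ q : Q ⧸ L, ∃ t, t ∈ T ∧ ((φ t : Q) : Q ⧸ L) = q := by
      intro q
      obtain ⟨x, rfl⟩ := QuotientGroup.mk_surjective q
      obtain ⟨g, rfl⟩ := hφ x
      obtain ⟨t, ⟨ht, hg⟩, -⟩ := hT1 g
      exact ⟨t, ht, (QuotientGroup.eq.2 (by simpa using hg)).symm⟩
    choose s hsT hs using hex
    have hst : ∀ t ∈ T, s (φ t : Q) = t := by
      intro t ht
      refine (hT1 t).unique ⟨hsT _, ?_⟩ ⟨ht, by simp⟩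
      simpa using QuotientGroup.eq.1 (hs (φ t : Q)).symm
    refine ⟨⟨s, hs, fun x => ?_⟩, Subtype.ext (Set.Subset.antisymm ?_ ?_)⟩
    · obtain ⟨g, rfl⟩ := hφ x
      obtain ⟨t, ⟨ht, hg⟩, hu⟩ := hT2 g
      refine ⟨(φ t : Q), ?_, fun q hq => ?_⟩
      · simpa [hst t ht] using hg
      · rw [← hu (s q) ⟨hsT q, by simpa using hq⟩]
        exact (hs q).symm
    · rintro _ ⟨q, rfl⟩
      exact hsT q
    · exact fun t ht => ⟨_, hst t ht⟩

/-- A surjective homomorphism is, as a map of sets, a projection with fibre its kernel. -/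
theorem exists_trivialization {G Q : Type*} [Group G] [Group Q] (φ : G →* Q)
    (hφ : Function.Surjective φ) : ∃ e : G ≃ Q × φ.ker, ∀ g, (e g).1 = φ g := by
  choose σ hσ using hφ
  exact ⟨{
    toFun := fun g => (φ g, ⟨g * (σ (φ g))⁻¹, by simp [MonoidHom.mem_ker, hσ]⟩)
    invFun := fun p => p.2 * σ p.1
    left_inv := fun g => by simp
    right_inv := fun ⟨q, k, hk⟩ => by
      rw [MonoidHom.mem_ker] at hk
      simp [hσ, hk] }, fun _ => rfl⟩

theorem numDT_comap {G Q : Type*} [Group G] [Finite G] [Group Q] [Finite Q] (φ : G →* Q)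
    (hφ : Function.Surjective φ) (L : Subgroup Q) :
    numDT (L.comap φ) (L.comap φ) = numDT L L * Nat.card φ.ker ^ L.index := by
  obtain ⟨e, he⟩ := exists_trivialization φ hφ
  have h1 := card_transversals (MonoidHom.id Q) Function.surjective_id L
  rw [Subgroup.comap_id] at h1
  rw [card_transversals φ hφ, h1, Subgroup.index, ← Nat.card_fun, ← Nat.card_prod]
  have hs : ∀ s : Q ⧸ L → G, (fun q => (e (s q)).1) = φ ∘ s := fun s => funext fun q => he _
  refine Nat.card_congr {
    toFun := fun s => (⟨fun q => (e (s.1 q)).1, by rw [hs]; exact s.2⟩, fun q => (e (s.1 q)).2)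
    invFun := fun p => ⟨fun q => e.symm (p.1.1 q, p.2 q), ?_⟩
    left_inv := fun s => by simp
    right_inv := fun p => by simp }
  rw [← hs]
  simpa using p.1.2

theorem transProb_comap {G Q : Type*} [Group G] [Finite G] [Group Q] [Finite Q] (φ : G →* Q)
    (hφ : Function.Surjective φ) (L : Subgroup Q) :
    transProb (L.comap φ) (L.comap φ) = transProb L L := by
  obtain ⟨e, -⟩ := exists_trivialization φ hφ
  have hi : (L.comap φ).index = L.index := L.index_comap_of_surjective hφ
  have hcard : Nat.card (L.comap φ) = Nat.card L * Nat.card φ.ker := by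
    have hG := (L.comap φ).card_mul_index
    rw [hi, Nat.card_congr e, Nat.card_prod, ← L.card_mul_index] at hG
    refine Nat.eq_of_mul_eq_mul_right (Nat.pos_of_ne_zero L.index_ne_zero_of_finite) ?_
    rw [hG]
    ring
  have hk : (Nat.card φ.ker : ℚ) ≠ 0 := Nat.cast_ne_zero.2 Nat.card_pos.ne'
  unfold transProb
  rw [numDT_comap φ hφ, hi, hcard]
  push_cast
  rw [mul_pow, mul_div_mul_right _ _ (pow_ne_zero _ hk)]

theorem stmt11 {G K : Type*} [Group G] [Finite G] [Group K] [Finite K]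
    (f : G →* K) (H : Subgroup G) (hker : f.ker ≤ H) :
    transProb H H =
      transProb ((H.map f).subgroupOf f.range) ((H.map f).subgroupOf f.range) := by
  have hH : ((H.map f).subgroupOf f.range).comap f.rangeRestrict = H := by
    conv_rhs => rw [← Subgroup.comap_map_eq_self hker]
    rfl
  rw [← transProb_comap f.rangeRestrict f.rangeRestrict_surjective, hH]
end
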